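/- Let n = 2, and fix an integer k₀ ≥ 1 and θ ∈ (0,1). Then there exists N₀ > 0 such that for every harmonic function u on the unit disc B₁ ⊂ ℝ² satisfying: the set {u ≠ 0} ∩ B₁ has at most k₀ connected components and ∫_{B_{1/2}} u² dx = 1, one has N(0,u,θ) ≤ N₀. -/

import Mathlib

open MeasureTheory Metric Filter

/-- The Laplacian of `u : ℝⁿ → ℝ` at `x`, as the sum of second partial derivatives. -/
noncomputable def lapl {n : ℕ} (u : EuclideanSpace ℝ (Fin n) → ℝ)
    (x : EuclideanSpace ℝ (Fin n)) : ℝ :=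
  ∑ i, fderiv ℝ (fun y => fderiv ℝ u y (EuclideanSpace.single i 1)) x (EuclideanSpace.single i 1)

/-- `u` is harmonic on all of ℝⁿ: it is C² and its Laplacian vanishes identically. -/
def HarmonicFn {n : ℕ} (u : EuclideanSpace ℝ (Fin n) → ℝ) : Prop :=
  ContDiff ℝ 2 u ∧ ∀ x, lapl u x = 0

/-- `u` is harmonic on the (open) set `Ω`: it is C² on `Ω` and its Laplacian vanishes on `Ω`. -/
def HarmonicFnOn {n : ℕ} (u : EuclideanSpace ℝ (Fin n) → ℝ)
    (Ω : Set (EuclideanSpace ℝ (Fin n))) : Prop :=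
  ContDiffOn ℝ 2 u Ω ∧ ∀ x ∈ Ω, lapl u x = 0

/-- The Dirichlet integral `D(x₀,u,r) = ∫_{B_r(x₀)} |∇u|² dx`. -/
noncomputable def DInt {n : ℕ} (u : EuclideanSpace ℝ (Fin n) → ℝ)
    (x₀ : EuclideanSpace ℝ (Fin n)) (r : ℝ) : ℝ :=
  ∫ x in Metric.ball x₀ r, ‖gradient u x‖ ^ 2

/-- The height `H(x₀,u,r) = ∫_{∂B_r(x₀)} u² dσ`, with respect to the
`(n-1)`-dimensional Hausdorff measure on the sphere. -/
noncomputable def HInt {n : ℕ} (u : EuclideanSpace ℝ (Fin n) → ℝ)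
    (x₀ : EuclideanSpace ℝ (Fin n)) (r : ℝ) : ℝ :=
  ∫ x in Metric.sphere x₀ r, (u x) ^ 2 ∂ μH[(n : ℝ) - 1]

/-- The Almgren frequency `N(x₀,u,r) = r · D(x₀,u,r) / H(x₀,u,r)`. -/
noncomputable def freqN {n : ℕ} (u : EuclideanSpace ℝ (Fin n) → ℝ)
    (x₀ : EuclideanSpace ℝ (Fin n)) (r : ℝ) : ℝ :=
  r * DInt u x₀ r / HInt u x₀ r

/-- The set of connected components of a subset `S` of a topological space. -/
def nodalComponents {X : Type*} [TopologicalSpace X] (S : Set X) : Set (Set X) :=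
  {C | ∃ x ∈ S, connectedComponentIn S x = C}

/-! Write `u = re f` with `f` holomorphic on the disc and `im f 0 = 0`. Near a simple solution `z`
of `f z = i t` the zero set of `u` is a smooth arc separating a piece of `{u > 0}` from a piece of
`{u < 0}`. If the pieces at two such solutions belonged to the same two nodal components, paths in
these components would close up to a curve meeting `{u = 0}` at the two solutions only. It separates
the two halves of the arc through one of them, so it encloses one half, and in the enclosed region
`im f` would attain an extremum along `{u = 0}`, against the open mapping theorem. So `f = i t` has
at most `k₀²` solutions unless `i t` is a critical value.

This bounds the growth of `f`. Averaging over `t ∈ [0, 1]` yields a noncritical level for which the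
circular mean of `log⁺ |f - i t|⁻¹` is at most an absolute constant. After division by the at most
`k₀²` linear factors, Jensen's formula and the Poisson formula bound `|f|` on a disc of radius
greater than `θ` by its maximum on a small circle, hence by the `L²` norm of `u` on the circle of
radius `θ`. Cauchy's estimate then bounds the Dirichlet integral. -/

section ContinuousLogarithm

/-- The ratio `(z - a) / (z - b)` has a continuous logarithm on `K`; multiplying out avoids any
convention at `z = b`. -/
def HasContinuousLogRatio (K : Set ℂ) (a b : ℂ) : Prop :=
  ∃ L : ℂ → ℂ, ContinuousOn L K ∧ ∀ z ∈ K, Complex.exp (L z) * (z - b) = z - a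

namespace HasContinuousLogRatio

variable {K : Set ℂ} {a b c : ℂ}

theorem symm (h : HasContinuousLogRatio K a b) : HasContinuousLogRatio K b a := by
  obtain ⟨L, hL, hexp⟩ := h
  refine ⟨fun z => -L z, hL.neg, fun z hz => ?_⟩
  rw [← hexp z hz, ← mul_assoc, ← Complex.exp_add, neg_add_cancel, Complex.exp_zero, one_mul]

theorem trans (hab : HasContinuousLogRatio K a b) (hbc : HasContinuousLogRatio K b c) :
    HasContinuousLogRatio K a c := by
  obtain ⟨L, hL, hexp⟩ := hab
  obtain ⟨L', hL', hexp'⟩ := hbc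
  refine ⟨fun z => L z + L' z, hL.add hL', fun z hz => ?_⟩
  rw [Complex.exp_add, mul_assoc, hexp' z hz, hexp z hz]

theorem of_dist_lt {δ : ℝ} (hK : ∀ z ∈ K, δ ≤ dist z b) (hab : dist b a < δ) :
    HasContinuousLogRatio K a b := by
  have hne : ∀ z ∈ K, z - b ≠ 0 := fun z hz hzb =>
    (dist_nonneg.trans_lt hab).not_ge <| (hK z hz).trans <| by simp [sub_eq_zero.1 hzb]
  have hslit : ∀ z ∈ K, 1 + (b - a) / (z - b) ∈ Complex.slitPlane := fun z hz => by
    apply Complex.mem_slitPlane_of_norm_lt_one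
    rw [norm_div, div_lt_one (norm_pos_iff.2 (hne z hz)), ← dist_eq_norm, ← dist_eq_norm]
    exact hab.trans_le (hK z hz)
  refine ⟨fun z => Complex.log (1 + (b - a) / (z - b)),
    (continuousOn_const.add (continuousOn_const.div (by fun_prop) hne)).clog hslit, fun z hz => ?_⟩
  rw [Complex.exp_log (Complex.slitPlane_ne_zero (hslit z hz)), add_mul, one_mul,
    div_mul_cancel₀ _ (hne z hz), sub_add_sub_cancel]

theorem of_isPreconnected {V : Set ℂ} (hK : IsCompact K) (hV : IsPreconnected V)
    (hVK : Disjoint V K) (ha : a ∈ V) (hb : b ∈ V) : HasContinuousLogRatio K a b := by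
  refine hV.induction₂' (HasContinuousLogRatio K) (fun x hx => ?_)
    (fun x y z _ _ _ hxy hyz => hxy.trans hyz) ha hb
  obtain ⟨δ, hδ, hball⟩ := Metric.mem_nhds_iff.1 <|
    hK.isClosed.isOpen_compl.mem_nhds (Set.disjoint_left.1 hVK hx)
  have hfar : ∀ z ∈ K, δ ≤ dist z x := fun z hz => not_lt.1 fun hlt => hball hlt hz
  filter_upwards [mem_nhdsWithin_of_mem_nhds (Metric.ball_mem_nhds x hδ)] with y hy
  have hyx : HasContinuousLogRatio K y x := of_dist_lt hfar (mem_ball'.1 hy)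
  exact ⟨hyx.symm, hyx⟩

end HasContinuousLogRatio

end ContinuousLogarithm

section Separation

theorem sub_div_add_mem_slitPlane {ε : ℝ} (hε : 0 < ε) {w : ℂ} (hw : w.re = 0 → ε < |w.im|) :
    (w - ε * Complex.I) / (w + ε * Complex.I) ∈ Complex.slitPlane := by
  have hne : w + ε * Complex.I ≠ 0 := fun h => by
    have hre : w.re = 0 := by simpa using congrArg Complex.re h
    have him : w.im = -ε := by simpa [add_eq_zero_iff_eq_neg] using congrArg Complex.im h
    simpa [him, abs_of_pos hε] using hw hre
  have hpos : 0 < Complex.normSq (w + ε * Complex.I) := Complex.normSq_pos.2 hne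
  have hre : ((w - ε * Complex.I) / (w + ε * Complex.I)).re =
      (w.re ^ 2 + w.im ^ 2 - ε ^ 2) / Complex.normSq (w + ε * Complex.I) := by
    rw [Complex.div_re, ← add_div]
    congr 1
    simp only [Complex.sub_re, Complex.add_re, Complex.sub_im, Complex.add_im,
      Complex.re_ofReal_mul, Complex.im_ofReal_mul, Complex.I_re, Complex.I_im]
    ring
  have him : ((w - ε * Complex.I) / (w + ε * Complex.I)).im =
      -(2 * ε * w.re) / Complex.normSq (w + ε * Complex.I) := by
    rw [Complex.div_im, ← sub_div]
    congr 1
    simp only [Complex.sub_re, Complex.add_re, Complex.sub_im, Complex.add_im,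
      Complex.re_ofReal_mul, Complex.im_ofReal_mul, Complex.I_re, Complex.I_im]
    ring
  rw [Complex.mem_slitPlane_iff, hre, him]
  by_cases h0 : w.re = 0
  · have hlt : ε ^ 2 < w.im ^ 2 := sq_lt_sq.2 (by simpa [abs_of_pos hε] using hw h0)
    exact Or.inl (div_pos (by rw [h0]; linarith) hpos)
  · exact Or.inr (div_ne_zero (by simp [hε.ne', h0]) hpos.ne')

theorem pi_div_two_lt_abs_arg_sub_div_add {ε s : ℝ} (hs : |s| < ε) :
    Real.pi / 2 < |Complex.arg ((s - ε * Complex.I) / (s + ε * Complex.I))| := by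
  have hε : 0 < ε := (abs_nonneg s).trans_lt hs
  have hpos : 0 < Complex.normSq (s + ε * Complex.I) :=
    Complex.normSq_pos.2 fun h => hε.ne' (by simpa using congrArg Complex.im h)
  rw [← not_le, Complex.abs_arg_le_pi_div_two_iff, not_le, Complex.div_re, ← add_div]
  refine div_neg_of_neg_of_pos ?_ hpos
  have hlt : s ^ 2 < ε ^ 2 := sq_lt_sq.2 (by rwa [abs_of_pos hε])
  simp only [Complex.sub_re, Complex.add_re, Complex.sub_im, Complex.add_im, Complex.re_ofReal_mul,
    Complex.im_ofReal_mul, Complex.ofReal_re, Complex.ofReal_im, Complex.I_re, Complex.I_im]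
  nlinarith

theorem conj_sub_div_add (ε s : ℝ) :
    (starRingEnd ℂ) ((s - ε * Complex.I) / (s + ε * Complex.I)) =
      ((-s : ℝ) - ε * Complex.I) / ((-s : ℝ) + ε * Complex.I) := by
  rw [map_div₀, ← neg_div_neg_eq]
  simp only [map_sub, map_add, map_mul, Complex.conj_ofReal, Complex.conj_I, Complex.ofReal_neg]
  ring_nf

theorem exists_log_eq_add_const {S : Set ℂ} (hS : IsPreconnected S) {L q : ℂ → ℂ}
    (hL : ContinuousOn L S) (hq : ContinuousOn q S) (hslit : ∀ z ∈ S, q z ∈ Complex.slitPlane)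
    (hexp : ∀ z ∈ S, Complex.exp (L z) = q z) :
    ∃ c, ∀ z ∈ S, Complex.log (q z) = L z + c := by
  have hint : ∀ z ∈ S, ∃ n : ℤ,
      (Complex.log (q z) - L z) = n * (2 * Real.pi * Complex.I) := fun z hz => by
    obtain ⟨n, hn⟩ := Complex.exp_eq_exp_iff_exists_int.1
      ((Complex.exp_log (Complex.slitPlane_ne_zero (hslit z hz))).trans (hexp z hz).symm)
    exact ⟨n, by rw [hn, add_sub_cancel_left]⟩
  have hcount : ((fun z => Complex.log (q z) - L z) '' S).Countable :=
    (Set.countable_range fun n : ℤ => (n * (2 * Real.pi * Complex.I) : ℂ)).mono <| by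
      rintro _ ⟨z, hz, rfl⟩
      obtain ⟨n, hn⟩ := hint z hz
      exact ⟨n, hn.symm⟩
  have hsub : ((fun z => Complex.log (q z) - L z) '' S).Subsingleton :=
    hcount.isTotallyDisconnected _ subset_rfl (hS.image _ ((hq.clog hslit).sub hL))
  rcases S.eq_empty_or_nonempty with rfl | ⟨x, hx⟩
  · exact ⟨0, by simp⟩
  · refine ⟨Complex.log (q x) - L x, fun z hz => ?_⟩
    exact sub_eq_iff_eq_add'.1 (hsub ⟨z, hz, rfl⟩ ⟨x, hx, rfl⟩)

theorem arg_tendsto_of_hasContinuousLogRatio {K : Set ℂ} {ε : ℝ} (hε : 0 < ε)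
    (hconn : IsPreconnected (K \ {0})) (h0 : (0 : ℂ) ∈ K)
    (hK : ∀ w ∈ K, w.re = 0 → |w.im| ≤ ε → w = 0)
    (hlog : HasContinuousLogRatio K (ε * Complex.I) (-(ε * Complex.I))) :
    ∃ α, Tendsto (fun w : ℂ => Complex.arg ((w - ε * Complex.I) / (w + ε * Complex.I)))
      (nhdsWithin 0 (K \ {0})) (nhds α) := by
  obtain ⟨L, hL, hexp⟩ := hlog
  have hden : ∀ z ∈ K, z + ε * Complex.I ≠ 0 := fun z hz h => by
    obtain rfl : z = -(ε * Complex.I) := eq_neg_of_add_eq_zero_left h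
    have hzero := hK _ hz (by simp) (by simp [abs_of_pos hε])
    simp [hε.ne'] at hzero
  obtain ⟨c, hc⟩ := exists_log_eq_add_const hconn
    (q := fun z => (z - ε * Complex.I) / (z + ε * Complex.I))
    (hL.mono Set.sdiff_subset)
    (ContinuousOn.div (by fun_prop) (by fun_prop) fun z hz => hden z hz.1)
    (fun z hz => sub_div_add_mem_slitPlane hε fun hre =>
      not_le.1 fun him => hz.2 (hK z hz.1 hre him))
    (fun z hz => (eq_div_iff (hden z hz.1)).2 (by simpa using hexp z hz.1))
  refine ⟨(L 0 + c).im, Tendsto.congr' ?_ <| Complex.continuous_im.continuousAt.tendsto.comp <|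
    ((hL 0 h0).mono Set.sdiff_subset).tendsto.add_const c⟩
  filter_upwards [self_mem_nhdsWithin] with z hz
  rw [Function.comp_apply, ← hc z hz, Complex.log_im]

/-- If `±εi` lay in one component, `arg ((w - εi) / (w + εi))` would have the same limit as
`w → 0` along either half of the real axis, but these limits are opposite and nonzero. -/
theorem not_isPreconnected_of_joins_sides {K V : Set ℂ} {ε ρ : ℝ} (hK : IsCompact K)
    (hε : 0 < ε) (hερ : ε < ρ) (hconn : IsPreconnected (K \ {0}))
    (hloc : ∀ w : ℂ, ‖w‖ < ρ → (w ∈ K ↔ w.im = 0)) (hVK : Disjoint V K)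
    (hpos : ε * Complex.I ∈ V) (hneg : -(ε * Complex.I) ∈ V) : ¬ IsPreconnected V := by
  intro hV
  have hρ : 0 < ρ := hε.trans hερ
  have hslit : ∀ w ∈ K, w.re = 0 → |w.im| ≤ ε → w = 0 := fun w hw hre him =>
    Complex.ext hre <| (hloc w <| by
      rw [← Complex.re_add_im w, hre]; simpa using him.trans_lt hερ).1 hw
  obtain ⟨α, hα⟩ := arg_tendsto_of_hasContinuousLogRatio hε hconn
    ((hloc 0 (by simpa using hρ)).2 rfl) hslit
    (HasContinuousLogRatio.of_isPreconnected hK hV hVK hpos hneg)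
  have hreal : Tendsto ((↑) : ℝ → ℂ) (nhdsWithin 0 {0}ᶜ) (nhdsWithin 0 (K \ {0})) := by
    refine tendsto_nhdsWithin_iff.2
      ⟨(Complex.continuous_ofReal.tendsto 0).mono_left nhdsWithin_le_nhds, ?_⟩
    filter_upwards [self_mem_nhdsWithin, mem_nhdsWithin_of_mem_nhds (ball_mem_nhds 0 hρ)]
      with s hs0 hs
    exact ⟨(hloc s (by simpa using hs)).2 (Complex.ofReal_im s), by simpa using hs0⟩
  have hsymm : Tendsto (fun s : ℝ => -s) (nhdsWithin 0 {0}ᶜ) (nhdsWithin 0 {0}ᶜ) := by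
    refine tendsto_nhdsWithin_iff.2
      ⟨(continuous_neg.tendsto' _ _ neg_zero).mono_left nhdsWithin_le_nhds, ?_⟩
    exact eventually_mem_nhdsWithin.mono fun s hs => neg_ne_zero.2 hs
  have hnear : ∀ᶠ s : ℝ in nhdsWithin 0 {0}ᶜ, |s| < ε :=
    mem_nhdsWithin_of_mem_nhds (by simpa [ball, dist_eq_norm] using ball_mem_nhds (0 : ℝ) hε)
  have hodd : α = -α := by
    refine tendsto_nhds_unique (hα.comp (hreal.comp hsymm)) ((hα.comp hreal).neg.congr' ?_)
    filter_upwards [self_mem_nhdsWithin] with s hs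
    simp only [Function.comp_apply, ← conj_sub_div_add, Complex.arg_conj]
    rw [if_neg]
    exact Complex.slitPlane_arg_ne_pi (sub_div_add_mem_slitPlane hε fun h => absurd h hs)
  have hlarge : Real.pi / 2 ≤ |α| :=
    ge_of_tendsto (hα.comp hreal).abs (hnear.mono fun s hs =>
      (pi_div_two_lt_abs_arg_sub_div_add hs).le)
  rw [self_eq_neg.1 hodd, abs_zero] at hlarge
  linarith [Real.pi_pos]

theorem not_isPreconnected_of_joins_sides_segment {K V : Set ℂ} {z e : ℂ} {ε ρ : ℝ} (he : e ≠ 0)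
    (hK : IsCompact K) (hε : 0 < ε) (hερ : ε < ρ) (hconn : IsPreconnected (K \ {z}))
    (hloc : ∀ w : ℂ, ‖w‖ < ρ → (z + e * w ∈ K ↔ w.im = 0)) (hVK : Disjoint V K)
    (hpos : z + e * (ε * Complex.I) ∈ V) (hneg : z + e * -(ε * Complex.I) ∈ V) :
    ¬ IsPreconnected V := by
  set φ : ℂ ≃ₜ ℂ := (Homeomorph.mulLeft₀ e he).trans (Homeomorph.addLeft z)
  have hφ : φ ⁻¹' {z} = {0} := by ext w; simp [φ, he]
  rw [← φ.isPreconnected_preimage]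
  refine not_isPreconnected_of_joins_sides (K := φ ⁻¹' K) (φ.isCompact_preimage.2 hK) hε hερ ?_
    hloc (hVK.preimage φ) hpos hneg
  rwa [← hφ, ← Set.preimage_sdiff, φ.isPreconnected_preimage]

end Separation

section PlaneTopology

theorem norm_add_mul_I_le (s σ : ℝ) : ‖(s + σ * Complex.I : ℂ)‖ ≤ |s| + |σ| := by
  simpa using Complex.norm_le_abs_re_add_abs_im (s + σ * Complex.I)

theorem isPreconnected_compl_closedBall {R : ℝ} (hR : 0 < R) :
    IsPreconnected (closedBall (0 : ℂ) R)ᶜ := by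
  suffices h : (closedBall (0 : ℂ) R)ᶜ = Complex.exp '' {z | Real.log R < z.re} from
    h ▸ (convex_halfSpace_re_gt _).isPreconnected.image _ Complex.continuous_exp.continuousOn
  ext z
  simp only [Set.mem_compl_iff, mem_closedBall_zero_iff, not_le]
  constructor
  · intro hz
    have hz0 : z ≠ 0 := norm_pos_iff.1 (hR.trans hz)
    refine ⟨Complex.log z, ?_, Complex.exp_log hz0⟩
    rw [Set.mem_ofPred_eq, Complex.log_re]
    exact Real.log_lt_log hR hz
  · rintro ⟨w, hw, rfl⟩
    rw [Complex.norm_exp]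
    exact (Real.log_lt_iff_lt_exp hR).1 hw

theorem closure_connectedComponentIn_compl_sdiff_subset {X : Type*} [TopologicalSpace X]
    [LocallyConnectedSpace X] {K : Set X} (hK : IsClosed K) (x : X) :
    closure (connectedComponentIn Kᶜ x) \ connectedComponentIn Kᶜ x ⊆ K := by
  rintro y ⟨hy, hyx⟩
  by_contra hyK
  have hmem : y ∈ connectedComponentIn Kᶜ y := mem_connectedComponentIn hyK
  obtain ⟨w, hwy, hwx⟩ := mem_closure_iff.1 hy _ hK.isOpen_compl.connectedComponentIn hmem
  exact hyx (connectedComponentIn_eq hwx ▸ connectedComponentIn_eq hwy ▸ hmem)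

theorem joinedIn_of_connectedComponentIn_eq {X : Type*} [TopologicalSpace X]
    [LocallyPathConnectedSpace X] {S : Set X} (hS : IsOpen S) {x y : X} (hx : x ∈ S) (hy : y ∈ S)
    (h : connectedComponentIn S x = connectedComponentIn S y) : JoinedIn S x y :=
  ((hS.connectedComponentIn.isConnected_iff_isPathConnected.1
    (isConnected_connectedComponentIn_iff.2 hx)).joinedIn x (mem_connectedComponentIn hx) y
      (h ▸ mem_connectedComponentIn hy)).mono (connectedComponentIn_subset _ _)

theorem component_subset_closedBall_of_joins_sides {K : Set ℂ} {z e : ℂ} {ε ρ R : ℝ} (he : e ≠ 0)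
    (hK : IsCompact K) (hε : 0 < ε) (hερ : ε < ρ) (hconn : IsPreconnected (K \ {z}))
    (hloc : ∀ w : ℂ, ‖w‖ < ρ → (z + e * w ∈ K ↔ w.im = 0)) (hR : 0 < R)
    (hKR : K ⊆ closedBall 0 R) :
    connectedComponentIn Kᶜ (z + e * (ε * Complex.I)) ⊆ closedBall 0 R ∨
      connectedComponentIn Kᶜ (z + e * -(ε * Complex.I)) ⊆ closedBall 0 R := by
  by_contra! h
  obtain ⟨⟨x, hx, hxR⟩, y, hy, hyR⟩ :=
    And.intro (Set.not_subset.1 h.1) (Set.not_subset.1 h.2)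
  refine not_isPreconnected_of_joins_sides_segment he hK hε hερ hconn hloc
    (Set.disjoint_left.2 ?_)
    (Or.inl (Or.inl (mem_connectedComponentIn (connectedComponentIn_nonempty_iff.1 ⟨x, hx⟩))))
    (Or.inr (mem_connectedComponentIn (connectedComponentIn_nonempty_iff.1 ⟨y, hy⟩)))
    (.union y (Or.inr hyR) hy (.union x hx hxR isPreconnected_connectedComponentIn
      (isPreconnected_compl_closedBall hR)) isPreconnected_connectedComponentIn)
  rintro w ((hw | hw) | hw)
  · exact connectedComponentIn_subset _ _ hw
  · exact fun hwK => hw (hKR hwK)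
  · exact connectedComponentIn_subset _ _ hw

/-- On the level set `{re f = 0}`, an open map admits no extremum of `im f`. -/
theorem re_ne_zero_of_isOpen_image {X : Type*} [TopologicalSpace X] {f : X → ℂ} {V : Set X} {t : ℝ}
    (hV : IsCompact (closure V)) (hf : ContinuousOn f (closure V)) (hopen : IsOpen (f '' V))
    (hfrontier : ∀ z ∈ closure V \ V, (f z).re = 0 → (f z).im = t) :
    ∀ z ∈ V, (f z).re ≠ 0 := by
  intro z₀ hz₀ hre₀
  set Z : Set X := closure V ∩ f ⁻¹' {w | w.re = 0}
  have hZ : IsCompact Z := hV.of_isClosed_subset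
    (hf.preimage_isClosed_of_isClosed isClosed_closure
      (isClosed_singleton.preimage Complex.continuous_re)) Set.inter_subset_left
  have him : ContinuousOn (fun z => (f z).im) Z :=
    Complex.continuous_im.comp_continuousOn (hf.mono Set.inter_subset_left)
  have hz₀Z : z₀ ∈ Z := ⟨subset_closure hz₀, hre₀⟩
  obtain ⟨M, hMZ, hM⟩ := hZ.exists_isMaxOn ⟨z₀, hz₀Z⟩ him
  obtain ⟨m, hmZ, hm⟩ := hZ.exists_isMinOn ⟨z₀, hz₀Z⟩ him
  have hperturb : ∀ z ∈ V, (f z).re = 0 → ∀ᶠ s : ℝ in nhds 0, ∃ y ∈ Z, (f y).im = (f z).im + s := by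
    intro z hz hre
    have hcont : Tendsto (fun s : ℝ => f z + s * Complex.I) (nhds 0) (nhds (f z)) :=
      Continuous.tendsto' (by fun_prop) _ _ (by simp)
    filter_upwards [hcont (hopen.mem_nhds ⟨z, hz, rfl⟩)] with s ⟨y, hy, hfy⟩
    exact ⟨y, ⟨subset_closure hy, by simp [hfy, hre]⟩, by simp [hfy]⟩
  have hlt_max : ∀ z ∈ V, (f z).re = 0 → (f z).im < (f M).im := by
    intro z hz hre
    obtain ⟨s, hs, y, hy, hyz⟩ := (hperturb z hz hre).exists_gt
    linarith [isMaxOn_iff.1 hM y hy]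
  have hmin_lt : ∀ z ∈ V, (f z).re = 0 → (f m).im < (f z).im := by
    intro z hz hre
    obtain ⟨s, hs, y, hy, hyz⟩ := (hperturb z hz hre).exists_lt
    linarith [isMinOn_iff.1 hm y hy]
  have hMt : (f M).im = t := hfrontier M ⟨hMZ.1, fun h => (hlt_max M h hMZ.2).false⟩ hMZ.2
  have hmt : (f m).im = t := hfrontier m ⟨hmZ.1, fun h => (hmin_lt m h hmZ.2).false⟩ hmZ.2
  exact ((hmin_lt z₀ hz₀ hre₀).trans (hlt_max z₀ hz₀ hre₀)).ne (hmt.trans hMt.symm)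

end PlaneTopology

section SignCross

/-- In the affine coordinate `w ↦ z + e * w`, the real part of `f` is positive on the sector
`|im w| ≤ re w` of the unit disc and negative on the opposite one, and this disc lies in `U`: the
local picture of the nodal set of `re f` at a regular point `z`. -/
structure IsSignCross (f : ℂ → ℂ) (U : Set ℂ) (z e : ℂ) : Prop where
  ne_zero : e ≠ 0
  mem : ∀ w : ℂ, ‖w‖ ≤ 1 → z + e * w ∈ U
  pos : ∀ w : ℂ, ‖w‖ ≤ 1 → 0 < w.re → |w.im| ≤ w.re → 0 < (f (z + e * w)).re
  neg : ∀ w : ℂ, ‖w‖ ≤ 1 → w.re < 0 → |w.im| ≤ -w.re → (f (z + e * w)).re < 0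

theorem exists_isSignCross {f : ℂ → ℂ} {U : Set ℂ} {z : ℂ} (hU : U ∈ nhds z)
    (hf : DifferentiableAt ℂ f z) (hre : (f z).re = 0) (hd : deriv f z ≠ 0) :
    ∃ e, IsSignCross f U z e := by
  set c := deriv f z
  have hc : 0 < ‖c‖ := norm_pos_iff.2 hd
  have hlin := (hasDerivAt_iff_isLittleO_nhds_zero.1 hf.hasDerivAt).def (div_pos hc four_pos)
  have hzU : ∀ᶠ h in nhds (0 : ℂ), z + h ∈ U :=
    Continuous.tendsto' (by fun_prop) 0 z (add_zero z) hU
  obtain ⟨δ, hδ, hball⟩ := nhds_basis_closedBall.eventually_iff.1 (hlin.and hzU)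
  set e : ℂ := δ * ‖c‖ / c with he
  have hec : e * c = δ * ‖c‖ := div_mul_cancel₀ _ hd
  have hnorm : ‖e‖ = δ := by simp [he, hc.ne', abs_of_pos hδ]
  have hmem : ∀ w : ℂ, ‖w‖ ≤ 1 → e * w ∈ closedBall 0 δ := fun w hw => by
    simpa [hnorm] using mul_le_of_le_one_right hδ.le hw
  have happrox : ∀ w : ℂ, ‖w‖ ≤ 1 →
      |(f (z + e * w)).re - δ * ‖c‖ * w.re| ≤ δ * ‖c‖ / 4 * (|w.re| + |w.im|) := fun w hw => by
    have hre_eq : (f (z + e * w) - f z - (e * w) • c).re =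
        (f (z + e * w)).re - δ * ‖c‖ * w.re := by
      rw [smul_eq_mul, mul_right_comm, hec]
      simp [hre]
    calc |(f (z + e * w)).re - δ * ‖c‖ * w.re|
        ≤ ‖c‖ / 4 * ‖e * w‖ := by
          rw [← hre_eq]; exact (Complex.abs_re_le_norm _).trans (hball (hmem w hw)).1
      _ = δ * ‖c‖ / 4 * ‖w‖ := by rw [norm_mul, hnorm]; ring
      _ ≤ _ := by gcongr; exact Complex.norm_le_abs_re_add_abs_im w
  have hδc : 0 < δ * ‖c‖ := mul_pos hδ hc
  refine ⟨e, by rw [← norm_pos_iff, hnorm]; exact hδ, fun w hw => (hball (hmem w hw)).2,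
    fun w hw hw0 him => ?_, fun w hw hw0 him => ?_⟩
  · have hle := (abs_le.1 (happrox w hw)).1
    rw [abs_of_pos hw0] at hle
    nlinarith
  · have hle := (abs_le.1 (happrox w hw)).2
    rw [abs_of_neg hw0] at hle
    nlinarith

/-- The diameter of a sign cross, joining its two tips `z - e` and `z + e`. -/
def crossSegment (z e : ℂ) : Set ℂ := (fun s : ℝ => z + e * s) '' Set.Icc (-1) 1

theorem isCompact_crossSegment (z e : ℂ) : IsCompact (crossSegment z e) :=
  isCompact_Icc.image (by fun_prop)

theorem isPreconnected_crossSegment (z e : ℂ) : IsPreconnected (crossSegment z e) :=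
  isPreconnected_Icc.image _ (by fun_prop)

theorem add_mem_crossSegment (z e : ℂ) : z + e ∈ crossSegment z e := ⟨1, by simp, by simp⟩

theorem sub_mem_crossSegment (z e : ℂ) : z - e ∈ crossSegment z e :=
  ⟨-1, by simp, by simp [sub_eq_add_neg]⟩

theorem add_mul_mem_crossSegment_iff {z e w : ℂ} (he : e ≠ 0) :
    z + e * w ∈ crossSegment z e ↔ |w.re| ≤ 1 ∧ w.im = 0 := by
  rw [abs_le]
  constructor
  · rintro ⟨s, hs, hsw⟩
    obtain rfl : (s : ℂ) = w := mul_left_cancel₀ he (add_left_cancel hsw)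
    exact ⟨hs, Complex.ofReal_im s⟩
  · rintro ⟨hre, him⟩
    exact ⟨w.re, hre, congrArg (z + e * ·) (Complex.ext rfl him.symm : (w.re : ℂ) = w)⟩

theorem isPreconnected_crossSegment_union_sdiff {z e : ℂ} (he : e ≠ 0) {A : Set ℂ}
    (hA : IsPreconnected A) (hz : z ∉ A) (hadd : z + e ∈ A) (hsub : z - e ∈ A) :
    IsPreconnected ((crossSegment z e ∪ A) \ {z}) := by
  set ℓ : ℝ → ℂ := fun s => z + e * s with hℓ
  have hcont : Continuous ℓ := by fun_prop
  have hinj : Function.Injective ℓ := fun s s' h => by simpa [hℓ, he] using h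
  have hleft : IsPreconnected (ℓ '' Set.Ico (-1) 0) := isPreconnected_Ico.image _ hcont.continuousOn
  have hright : IsPreconnected (ℓ '' Set.Ioc 0 1) := isPreconnected_Ioc.image _ hcont.continuousOn
  have hsplit : (crossSegment z e ∪ A) \ {z} = ℓ '' Set.Ico (-1) 0 ∪ A ∪ ℓ '' Set.Ioc 0 1 := by
    have hIcc : Set.Icc (-1 : ℝ) 1 \ {0} = Set.Ico (-1) 0 ∪ Set.Ioc 0 1 := by
      ext s
      simp only [Set.mem_sdiff, Set.mem_Icc, Set.mem_singleton_iff, Set.mem_union, Set.mem_Ico,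
        Set.mem_Ioc]
      grind
    have hcenter : ({z} : Set ℂ) = ℓ '' {0} := by simp [hℓ]
    rw [Set.union_sdiff_distrib, Set.sdiff_singleton_eq_self hz, crossSegment, hcenter,
      ← Set.image_sdiff hinj, hIcc, Set.image_union, Set.union_right_comm]
  rw [hsplit]
  refine .union (z + e) (Or.inr hadd) ⟨1, by simp, by simp [hℓ]⟩
    (.union (z - e) ⟨-1, by simp, by simp [hℓ, sub_eq_add_neg]⟩ hsub hleft hA) hright

namespace IsSignCross

variable {f : ℂ → ℂ} {z e : ℂ}

theorem pos_of_pos {U : Set ℂ} (h : IsSignCross f U z e) {s : ℝ} (hs : 0 < s) (hs1 : s ≤ 1) :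
    0 < (f (z + e * s)).re :=
  h.pos s (by simpa [abs_of_pos hs] using hs1) (by simpa using hs) (by simpa using hs.le)

theorem neg_of_neg {U : Set ℂ} (h : IsSignCross f U z e) {s : ℝ} (hs : s < 0) (hs1 : -1 ≤ s) :
    (f (z + e * s)).re < 0 :=
  h.neg s (by simpa [abs_of_neg hs] using neg_le.1 hs1) (by simpa using hs) (by simpa using hs.le)

theorem re_add_pos {U : Set ℂ} (h : IsSignCross f U z e) : 0 < (f (z + e)).re := by
  simpa using h.pos_of_pos one_pos le_rfl

theorem re_sub_neg {U : Set ℂ} (h : IsSignCross f U z e) : (f (z - e)).re < 0 := by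
  simpa [sub_eq_add_neg] using h.neg_of_neg neg_one_lt_zero le_rfl

theorem crossSegment_subset {U : Set ℂ} (h : IsSignCross f U z e) : crossSegment z e ⊆ U := by
  rintro _ ⟨s, hs, rfl⟩
  exact h.mem s (by simpa using abs_le.2 hs)

theorem eq_center {U : Set ℂ} (h : IsSignCross f U z e) {w : ℂ} (hw : w ∈ crossSegment z e)
    (hre : (f w).re = 0) : w = z := by
  obtain ⟨s, hs, rfl⟩ := hw
  rcases lt_trichotomy s 0 with hneg | rfl | hpos
  · exact absurd hre (h.neg_of_neg hneg hs.1).ne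
  · simp
  · exact absurd hre (h.pos_of_pos hpos hs.2).ne'

theorem exists_re_eq_zero {U : Set ℂ} (h : IsSignCross f U z e) (hf : ContinuousOn f U) {σ : ℝ}
    (hσ0 : σ ≠ 0) (hσ : |σ| ≤ 1 / 2) :
    ∃ s : ℝ, |s| ≤ |σ| ∧ (f (z + e * (s + σ * Complex.I))).re = 0 := by
  have hpos : 0 < |σ| := abs_pos.2 hσ0
  have hnorm : ∀ s : ℝ, |s| ≤ |σ| → ‖(s + σ * Complex.I : ℂ)‖ ≤ 1 := fun s hs =>
    (norm_add_mul_I_le s σ).trans (by linarith)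
  have hcont : ContinuousOn (fun s : ℝ => (f (z + e * (s + σ * Complex.I))).re)
      (Set.Icc (-|σ|) |σ|) :=
    Complex.continuous_re.comp_continuousOn <| hf.comp (by fun_prop) fun s hs =>
      h.mem _ (hnorm s (abs_le.2 hs))
  have hleft := h.neg _ (hnorm (-|σ|) (by simp)) (by simpa using hσ0) (by simp)
  have hright := h.pos _ (hnorm |σ| (by simp)) (by simpa using hσ0) (by simp)
  obtain ⟨s, hs, hs0⟩ := intermediate_value_Icc (by linarith) hcont ⟨hleft.le, hright.le⟩
  exact ⟨s, abs_le.2 hs, hs0⟩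

theorem isOpen_image (h : IsSignCross f (ball 0 1) z e) (hf : AnalyticOnNhd ℂ f (ball 0 1))
    {V : Set ℂ} (hV : IsOpen V) (hVball : V ⊆ ball 0 1) : IsOpen (f '' V) := by
  refine (hf.is_constant_or_isOpen (convex_ball _ _).isPreconnected).resolve_left ?_ V hVball hV
  rintro ⟨c, hc⟩
  have hpos := h.re_add_pos
  have hneg := h.re_sub_neg
  rw [hc _ (h.crossSegment_subset (add_mem_crossSegment z e))] at hpos
  rw [hc _ (h.crossSegment_subset (sub_mem_crossSegment z e))] at hneg
  exact hpos.asymm hneg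

/-- The component of `Kᶜ` on either side of the cross contains zeros of `re f`, so by the maximum
principle it cannot be enclosed by `K`. -/
theorem not_component_subset_closedBall (h : IsSignCross f (ball 0 1) z e)
    (hf : AnalyticOnNhd ℂ f (ball 0 1)) {K : Set ℂ} (hK : IsClosed K) {t : ℝ}
    (hlevel : ∀ w ∈ K, (f w).re = 0 → (f w).im = t) {σ : ℝ} (hσ0 : σ ≠ 0) (hσ : |σ| ≤ 1 / 2)
    (hside : ∀ s : ℝ, |s| ≤ |σ| → z + e * (s + σ * Complex.I) ∉ K) {R : ℝ} (hR : R < 1) :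
    ¬ connectedComponentIn Kᶜ (z + e * (σ * Complex.I)) ⊆ closedBall (0 : ℂ) R := by
  intro hVR
  set V := connectedComponentIn Kᶜ (z + e * (σ * Complex.I))
  have hclosure : closure V ⊆ closedBall 0 R := closure_minimal hVR isClosed_closedBall
  have hclosure' : closure V ⊆ ball 0 1 := hclosure.trans (closedBall_subset_ball hR)
  have hray : (fun s : ℝ => z + e * (s + σ * Complex.I)) '' Set.Icc (-|σ|) |σ| ⊆ V := by
    refine (isPreconnected_Icc.image _ (by fun_prop)).subset_connectedComponentIn
      ⟨0, by simp, by simp⟩ ?_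
    rintro _ ⟨s, hs, rfl⟩
    exact hside s (abs_le.2 hs)
  obtain ⟨s, hs, hre⟩ := h.exists_re_eq_zero hf.continuousOn hσ0 hσ
  refine re_ne_zero_of_isOpen_image
    ((isCompact_closedBall (0 : ℂ) R).of_isClosed_subset isClosed_closure hclosure)
    (hf.continuousOn.mono hclosure')
    (h.isOpen_image hf hK.isOpen_compl.connectedComponentIn (subset_closure.trans hclosure'))
    (fun w hw => hlevel w (closure_connectedComponentIn_compl_sdiff_subset hK _ hw))
    _ (hray ⟨s, abs_le.1 hs, rfl⟩) hre

theorem exists_add_mul_mem_union_iff (h : IsSignCross f (ball 0 1) z e) {A : Set ℂ}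
    (hA : IsClosed A) (hz : z ∉ A) :
    ∃ ρ > 0, ρ ≤ 1 ∧ ∀ w : ℂ, ‖w‖ < ρ → (z + e * w ∈ crossSegment z e ∪ A ↔ w.im = 0) := by
  have hnear : ∀ᶠ w in nhds (0 : ℂ), z + e * w ∉ A :=
    (Continuous.tendsto' (by fun_prop) 0 z (by simp) : Tendsto (fun w => z + e * w) _ _)
      (hA.isOpen_compl.mem_nhds hz)
  obtain ⟨ρ, hρ, hball⟩ := Metric.eventually_nhds_iff_ball.1 hnear
  refine ⟨min ρ 1, lt_min hρ one_pos, min_le_right _ _, fun w hw => ?_⟩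
  rw [lt_min_iff] at hw
  rw [Set.mem_union, or_iff_left (hball w (mem_ball_zero_iff.2 hw.1)),
    add_mul_mem_crossSegment_iff h.ne_zero,
    and_iff_right ((Complex.abs_re_le_norm w).trans hw.2.le)]

/-- If `z` were off `A`, the closed curve made of the cross and `A` would separate the two sides of
the cross, while both of them reach the outside of the disc. -/
theorem mem_of_loop (h : IsSignCross f (ball 0 1) z e) (hf : AnalyticOnNhd ℂ f (ball 0 1))
    {A : Set ℂ} (hA : IsCompact A) (hconn : IsPreconnected A) (hball : A ⊆ ball 0 1)
    (hadd : z + e ∈ A) (hsub : z - e ∈ A)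
    (hlevel : ∀ w ∈ A, (f w).re = 0 → (f w).im = (f z).im) : z ∈ A := by
  by_contra hz
  obtain ⟨ρ, hρ, hρ1, hloc⟩ := h.exists_add_mul_mem_union_iff hA.isClosed hz
  set K := crossSegment z e ∪ A
  have hK : IsCompact K := (isCompact_crossSegment z e).union hA
  have hlevelK : ∀ w ∈ K, (f w).re = 0 → (f w).im = (f z).im := by
    rintro w (hw | hw) hre
    · rw [h.eq_center hw hre]
    · exact hlevel w hw hre
  obtain ⟨R, ⟨hR0, hR1⟩, hKR⟩ := exists_pos_lt_subset_ball one_pos hK.isClosed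
    (Set.union_subset h.crossSegment_subset hball)
  have hoff : ∀ s σ : ℝ, σ ≠ 0 → |σ| ≤ ρ / 4 → |s| ≤ |σ| → z + e * (s + σ * Complex.I) ∉ K := by
    intro s σ hσ0 hσ hs
    rw [hloc _ ((norm_add_mul_I_le s σ).trans_lt (by linarith))]
    simpa using hσ0
  have hescape : ∀ σ : ℝ, σ ≠ 0 → |σ| ≤ ρ / 4 →
      ¬ connectedComponentIn Kᶜ (z + e * (σ * Complex.I)) ⊆ closedBall (0 : ℂ) R :=
    fun σ hσ0 hσ => h.not_component_subset_closedBall hf hK.isClosed hlevelK hσ0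
      (by linarith) (fun s => hoff s σ hσ0 hσ) hR1
  have hε : |ρ / 4| ≤ ρ / 4 := (abs_of_pos (by positivity)).le
  have hε0 : ρ / 4 ≠ 0 := by positivity
  rcases component_subset_closedBall_of_joins_sides h.ne_zero hK (by positivity : 0 < ρ / 4)
    (by linarith) (isPreconnected_crossSegment_union_sdiff h.ne_zero hconn hz hadd hsub) hloc hR0
    (hKR.trans ball_subset_closedBall) with hside | hside
  · exact hescape _ hε0 hε hside
  · exact hescape (-(ρ / 4)) (neg_ne_zero.2 hε0) ((abs_neg _).trans_le hε) (by simpa using hside)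

end IsSignCross

end SignCross

section NodalCount

variable {f : ℂ → ℂ}

theorem eq_of_isSignCross_of_joinedIn (hf : AnalyticOnNhd ℂ f (ball 0 1)) {z₁ z₂ e₁ e₂ : ℂ}
    (h₁ : IsSignCross f (ball 0 1) z₁ e₁) (h₂ : IsSignCross f (ball 0 1) z₂ e₂)
    (hre : (f z₁).re = 0) (heq : f z₁ = f z₂)
    (hadd : JoinedIn {z | z ∈ ball 0 1 ∧ (f z).re ≠ 0} (z₁ + e₁) (z₂ + e₂))
    (hsub : JoinedIn {z | z ∈ ball 0 1 ∧ (f z).re ≠ 0} (z₁ - e₁) (z₂ - e₂)) : z₁ = z₂ := by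
  obtain ⟨γ, hγ⟩ := hadd
  obtain ⟨δ, hδ⟩ := hsub
  have hball : Set.range γ ∪ crossSegment z₂ e₂ ∪ Set.range δ ⊆ ball 0 1 := by
    rintro _ ((⟨s, rfl⟩ | hw) | ⟨s, rfl⟩)
    exacts [(hγ s).1, h₂.crossSegment_subset hw, (hδ s).1]
  have hcenter : ∀ w ∈ Set.range γ ∪ crossSegment z₂ e₂ ∪ Set.range δ, (f w).re = 0 → w = z₂ := by
    rintro _ ((⟨s, rfl⟩ | hw) | ⟨s, rfl⟩) hw0
    exacts [absurd hw0 (hγ s).2, h₂.eq_center hw hw0, absurd hw0 (hδ s).2]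
  refine hcenter z₁ (h₁.mem_of_loop hf ?_ ?_ hball (Or.inl (Or.inl ⟨0, γ.source⟩))
    (Or.inr ⟨0, δ.source⟩) fun w hw hw0 => ?_) hre
  · exact ((isCompact_range γ.continuous).union (isCompact_crossSegment z₂ e₂)).union
      (isCompact_range δ.continuous)
  · exact .union (z₂ - e₂) (Or.inr (sub_mem_crossSegment z₂ e₂)) ⟨1, δ.target⟩
      (.union (z₂ + e₂) ⟨1, γ.target⟩ (add_mem_crossSegment z₂ e₂)
        (isPreconnected_range γ.continuous) (isPreconnected_crossSegment z₂ e₂))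
      (isPreconnected_range δ.continuous)
  · rw [hcenter w hw hw0, heq]

theorem encard_level_le_encard_nodalComponents_sq (hf : AnalyticOnNhd ℂ f (ball 0 1)) {a : ℂ}
    (ha : a.re = 0) (hsimple : ∀ z ∈ ball 0 1, f z = a → deriv f z ≠ 0) :
    {z | z ∈ ball 0 1 ∧ f z = a}.encard ≤
      (nodalComponents {z | z ∈ ball 0 1 ∧ (f z).re ≠ 0}).encard ^ 2 := by
  set S := {z | z ∈ ball 0 1 ∧ (f z).re ≠ 0}
  have hre : ContinuousOn (fun z => (f z).re) (ball 0 1) :=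
    Complex.continuous_re.comp_continuousOn hf.continuousOn
  have hS : IsOpen S := hre.isOpen_inter_preimage isOpen_ball isOpen_compl_singleton
  have hcross : ∀ z, ∃ e, z ∈ ball 0 1 ∧ f z = a → IsSignCross f (ball 0 1) z e := by
    intro z
    by_cases hz : z ∈ ball 0 1 ∧ f z = a
    · obtain ⟨e, he⟩ := exists_isSignCross (isOpen_ball.mem_nhds hz.1)
        (hf z hz.1).differentiableAt (hz.2 ▸ ha) (hsimple z hz.1 hz.2)
      exact ⟨e, fun _ => he⟩
    · exact ⟨0, fun h => absurd h hz⟩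
  choose e he using hcross
  have hadd : ∀ z, z ∈ ball 0 1 ∧ f z = a → z + e z ∈ S := fun z hz =>
    ⟨(he z hz).crossSegment_subset (add_mem_crossSegment _ _), (he z hz).re_add_pos.ne'⟩
  have hsub : ∀ z, z ∈ ball 0 1 ∧ f z = a → z - e z ∈ S := fun z hz =>
    ⟨(he z hz).crossSegment_subset (sub_mem_crossSegment _ _), (he z hz).re_sub_neg.ne⟩
  rw [sq, ← Set.encard_prod]
  refine Set.encard_le_encard_of_injOn
    (f := fun z => (connectedComponentIn S (z + e z), connectedComponentIn S (z - e z)))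
    (fun z hz => ⟨⟨_, hadd z hz, rfl⟩, ⟨_, hsub z hz, rfl⟩⟩) fun z hz w hw hzw => ?_
  rw [Prod.mk.injEq] at hzw
  exact eq_of_isSignCross_of_joinedIn hf (he z hz) (he w hw) (hz.2 ▸ ha) (hz.2.trans hw.2.symm)
    (joinedIn_of_connectedComponentIn_eq hS (hadd z hz) (hadd w hw) hzw.1)
    (joinedIn_of_connectedComponentIn_eq hS (hsub z hz) (hsub w hw) hzw.2)

end NodalCount

section ZeroFactor

variable {U : Set ℂ} {g h : ℂ → ℂ} {Z : Finset ℂ}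

theorem exists_eq_prod_sub_mul (hU : IsOpen U) (hg : DifferentiableOn ℂ g U)
    (hZ : ∀ z ∈ Z, z ∈ U ∧ g z = 0) :
    ∃ h, DifferentiableOn ℂ h U ∧ ∀ z, g z = (∏ w ∈ Z, (z - w)) * h z := by
  induction Z using Finset.induction_on with
  | empty => exact ⟨g, hg, by simp⟩
  | insert a Z ha ih =>
    obtain ⟨haU, hga⟩ := hZ a (Finset.mem_insert_self a Z)
    obtain ⟨h, hh, hgh⟩ := ih fun z hz => hZ z (Finset.mem_insert_of_mem hz)
    have hprod : ∏ w ∈ Z, (a - w) ≠ 0 :=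
      Finset.prod_ne_zero_iff.2 fun w hw => sub_ne_zero.2 fun haw => ha (haw ▸ hw)
    have hha : h a = 0 := (mul_eq_zero.1 ((hgh a).symm.trans hga)).resolve_left hprod
    refine ⟨dslope h a, (Complex.differentiableOn_dslope (hU.mem_nhds haU)).2 hh, fun z => ?_⟩
    have hslope : (z - a) * dslope h a z = h z := by
      rw [← smul_eq_mul, sub_smul_dslope, hha, sub_zero]
    rw [hgh z, Finset.prod_insert ha, ← hslope]
    ring

theorem cofactor_ne_zero_of_deriv_ne_zero (hgh : ∀ z, g z = (∏ w ∈ Z, (z - w)) * h z) {z : ℂ}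
    (hz : z ∈ Z) (hh : DifferentiableAt ℂ h z) (hg : deriv g z ≠ 0) : h z ≠ 0 := by
  intro hzero
  have hprod : ∏ w ∈ Z, (z - w) = 0 := Finset.prod_eq_zero hz (sub_self z)
  have hfactor : DifferentiableAt ℂ (fun z => ∏ w ∈ Z, (z - w)) z := by fun_prop
  refine hg ?_
  rw [show g = (fun z => ∏ w ∈ Z, (z - w)) * h from funext hgh,
    (hfactor.hasDerivAt.mul hh.hasDerivAt).deriv, hzero, hprod, mul_zero, zero_mul, add_zero]

theorem exists_eq_prod_sub_mul_ne_zero (hU : IsOpen U) (hg : DifferentiableOn ℂ g U)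
    (hZ : ∀ z, z ∈ Z ↔ z ∈ U ∧ g z = 0) (hsimple : ∀ z ∈ Z, deriv g z ≠ 0) :
    ∃ h, DifferentiableOn ℂ h U ∧ (∀ z ∈ U, h z ≠ 0) ∧ ∀ z, g z = (∏ w ∈ Z, (z - w)) * h z := by
  obtain ⟨h, hh, hgh⟩ := exists_eq_prod_sub_mul hU hg fun z => (hZ z).1
  refine ⟨h, hh, fun z hz => ?_, hgh⟩
  by_cases hzZ : z ∈ Z
  · exact cofactor_ne_zero_of_deriv_ne_zero hgh hzZ (hh.differentiableAt (hU.mem_nhds hz))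
      (hsimple z hzZ)
  · exact fun hzero => hzZ ((hZ z).2 ⟨hz, by rw [hgh, hzero, mul_zero]⟩)

variable {c : ℂ} {R B : ℝ}

theorem eventually_notMem_codiscreteWithin (Z : Finset ℂ) (S : Set ℂ) :
    ∀ᶠ z in codiscreteWithin S, z ∉ Z :=
  compl_finite_mem_codiscreteWithin Z.finite_toSet

theorem sum_log_norm_sub_add_log_norm {z : ℂ} (hz : z ∉ Z) (hh : h z ≠ 0)
    (hgh : g z = (∏ w ∈ Z, (z - w)) * h z) :
    ∑ w ∈ Z, Real.log ‖z - w‖ + Real.log ‖h z‖ = Real.log ‖g z‖ := by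
  have hne : ∀ w ∈ Z, ‖z - w‖ ≠ 0 := fun w hw =>
    norm_ne_zero_iff.2 (sub_ne_zero.2 fun hzw => hz (hzw ▸ hw))
  rw [hgh, norm_mul, norm_prod, Real.log_mul (Finset.prod_ne_zero_iff.2 hne)
    (norm_ne_zero_iff.2 hh), Real.log_prod hne]

theorem log_norm_cofactor_le (hR : R ≠ 0) (hh : AnalyticOnNhd ℂ h (closedBall c |R|))
    (hne : ∀ z ∈ closedBall c |R|, h z ≠ 0) (hgh : ∀ z, g z = (∏ w ∈ Z, (z - w)) * h z)
    (hg : ∀ z ∈ sphere c |R|, Real.log ‖g z‖ ≤ B) :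
    Real.log ‖h c‖ ≤ B - Z.card * Real.log R := by
  have hsubInt : ∀ w ∈ Z, CircleIntegrable (fun z => Real.log ‖z - w‖) c R := fun w _ =>
    circleIntegrable_log_norm_sub_const R
  have hsumInt : CircleIntegrable (fun z => ∑ w ∈ Z, Real.log ‖z - w‖) c R :=
    CircleIntegrable.fun_sum Z hsubInt
  have hhInt : CircleIntegrable (fun z => Real.log ‖h z‖) c R :=
    (hh.mono sphere_subset_closedBall).meromorphicOn.circleIntegrable_log_norm
  have hcongr : (fun z => ∑ w ∈ Z, Real.log ‖z - w‖ + Real.log ‖h z‖)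
      =ᶠ[codiscreteWithin (sphere c |R|)] fun z => Real.log ‖g z‖ := by
    filter_upwards [eventually_notMem_codiscreteWithin Z _, self_mem_codiscreteWithin _]
      with z hz hzR
    exact sum_log_norm_sub_add_log_norm hz (hne z (sphere_subset_closedBall hzR)) (hgh z)
  have hjensen : ∑ w ∈ Z, Real.circleAverage (fun z => Real.log ‖z - w‖) c R + Real.log ‖h c‖ =
      Real.circleAverage (fun z => Real.log ‖g z‖) c R := by
    rw [← hh.circleAverage_log_norm_of_ne_zero hne, ← Real.circleAverage_fun_sum hsubInt,
      ← Real.circleAverage_fun_add hsumInt hhInt,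
      Real.circleAverage_congr_codiscreteWithin hcongr hR]
  have hupper : Real.circleAverage (fun z => Real.log ‖g z‖) c R ≤ B :=
    Real.circleAverage_mono_on_of_le_circle
      ((circleIntegrable_congr_codiscreteWithin hcongr).1 (hsumInt.add hhInt)) hg
  have hlower : Z.card * Real.log R ≤
      ∑ w ∈ Z, Real.circleAverage (fun z => Real.log ‖z - w‖) c R := by
    rw [← nsmul_eq_mul]
    refine Finset.card_nsmul_le_sum Z _ _ fun w _ => ?_
    rw [circleAverage_log_norm_sub_const_eq_log_radius_add_posLog hR]
    exact le_add_of_nonneg_right Real.posLog_nonneg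
  linarith

theorem circleAverage_posLog_norm_of_ne_zero (hh : AnalyticOnNhd ℂ h (closedBall c |R|))
    (hne : ∀ z ∈ closedBall c |R|, h z ≠ 0) :
    Real.circleAverage (fun z => Real.posLog ‖h z‖) c R =
      Real.log ‖h c‖ + Real.circleAverage (fun z => Real.posLog ‖h z‖⁻¹) c R := by
  have hhm : MeromorphicOn h (sphere c |R|) := (hh.mono sphere_subset_closedBall).meromorphicOn
  have hinv : CircleIntegrable (fun z => Real.posLog ‖h z‖⁻¹) c R := by
    simpa only [Pi.inv_apply, norm_inv] using hhm.inv.circleIntegrable_posLog_norm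
  rw [← hh.circleAverage_log_norm_of_ne_zero hne,
    ← Real.circleAverage_fun_add hhm.circleIntegrable_log_norm hinv]
  simp only [← Real.posLog_sub_posLog_inv, sub_add_cancel]

theorem circleAverage_posLog_norm_inv_cofactor_le (hR : R ≠ 0)
    (hh : MeromorphicOn h (sphere c |R|)) (hgh : ∀ z, g z = (∏ w ∈ Z, (z - w)) * h z)
    (hB : ∀ z ∈ sphere c |R|, ∀ w ∈ Z, Real.posLog ‖z - w‖ ≤ B) :
    Real.circleAverage (fun z => Real.posLog ‖h z‖⁻¹) c R ≤
      Z.card * B + Real.circleAverage (fun z => Real.posLog ‖g z‖⁻¹) c R := by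
  have hg : MeromorphicOn g (sphere c |R|) := by
    rw [funext hgh]
    exact (MeromorphicOn.fun_prod fun w _ z _ => by fun_prop).fun_mul hh
  have hhInt : CircleIntegrable (fun z => Real.posLog ‖h z‖⁻¹) c R := by
    simpa only [Pi.inv_apply, norm_inv] using hh.inv.circleIntegrable_posLog_norm
  have hgInt : CircleIntegrable (fun z => Real.posLog ‖g z‖⁻¹) c R := by
    simpa only [Pi.inv_apply, norm_inv] using hg.inv.circleIntegrable_posLog_norm
  have hcongr : (fun z => Real.posLog ‖h z‖⁻¹) =ᶠ[codiscreteWithin (sphere c |R|)]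
      fun z => Real.posLog ((∏ w ∈ Z, ‖z - w‖) * ‖g z‖⁻¹) := by
    filter_upwards [eventually_notMem_codiscreteWithin Z _] with z hz
    have hprod : ∏ w ∈ Z, ‖z - w‖ ≠ 0 := Finset.prod_ne_zero_iff.2 fun w hw =>
      norm_ne_zero_iff.2 (sub_ne_zero.2 fun hzw => hz (hzw ▸ hw))
    rw [hgh, norm_mul, norm_prod, mul_inv, mul_inv_cancel_left₀ hprod]
  have hpoint : ∀ z ∈ sphere c |R|, Real.posLog ((∏ w ∈ Z, ‖z - w‖) * ‖g z‖⁻¹) ≤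
      Z.card * B + Real.posLog ‖g z‖⁻¹ := fun z hz => calc
    _ ≤ Real.posLog (∏ w ∈ Z, ‖z - w‖) + Real.posLog ‖g z‖⁻¹ := Real.posLog_mul
    _ ≤ ∑ w ∈ Z, Real.posLog ‖z - w‖ + Real.posLog ‖g z‖⁻¹ := by gcongr; exact Real.posLog_prod ..
    _ ≤ Z.card * B + Real.posLog ‖g z‖⁻¹ := by
      rw [← nsmul_eq_mul]; gcongr; exact Finset.sum_le_card_nsmul Z _ _ (hB z hz)
  calc Real.circleAverage (fun z => Real.posLog ‖h z‖⁻¹) c R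
      = Real.circleAverage (fun z => Real.posLog ((∏ w ∈ Z, ‖z - w‖) * ‖g z‖⁻¹)) c R :=
        Real.circleAverage_congr_codiscreteWithin hcongr hR
    _ ≤ Real.circleAverage (fun z => Z.card * B + Real.posLog ‖g z‖⁻¹) c R :=
        Real.circleAverage_mono ((circleIntegrable_congr_codiscreteWithin hcongr).1 hhInt)
          ((circleIntegrable_const _ c R).add hgInt) hpoint
    _ = Z.card * B + Real.circleAverage (fun z => Real.posLog ‖g z‖⁻¹) c R := by
        rw [Real.circleAverage_fun_add (circleIntegrable_const _ c R) hgInt,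
          Real.circleAverage_const]

end ZeroFactor

section VerticalTranslate

theorem integrable_posLog_inv : Integrable fun s : ℝ => Real.posLog s⁻¹ := by
  have hsupp : (fun s : ℝ => Real.posLog s⁻¹) =
      (Set.Icc (-1) 1).indicator fun s => -Real.log s := by
    funext s
    by_cases hs : s ∈ Set.Icc (-1 : ℝ) 1
    · have hlog : Real.log s ≤ 0 :=
        Real.log_abs s ▸ Real.log_nonpos (abs_nonneg s) (abs_le.2 hs)
      rw [Set.indicator_of_mem hs, Real.posLog_apply, Real.log_inv, max_eq_right (by linarith)]
    · rw [Set.indicator_of_notMem hs, Real.posLog_eq_zero_iff, abs_inv]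
      exact inv_le_one_of_one_le₀ (not_le.1 fun h => hs (abs_le.1 h)).le
  rw [hsupp, integrable_indicator_iff measurableSet_Icc, integrableOn_Icc_iff_integrableOn_Ioc,
    ← intervalIntegrable_iff_integrableOn_Ioc_of_le (by norm_num)]
  exact intervalIntegral.intervalIntegrable_log'.neg

theorem lintegral_posLog_norm_sub_inv_le (w : ℂ) :
    ∫⁻ t : ℝ, ENNReal.ofReal (Real.posLog ‖w - t * Complex.I‖⁻¹) ≤
      ∫⁻ s : ℝ, ENNReal.ofReal (Real.posLog s⁻¹) := by
  rw [← lintegral_sub_left_eq_self (fun s => ENNReal.ofReal (Real.posLog s⁻¹)) w.im]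
  refine lintegral_mono_ae ?_
  filter_upwards [(Set.countable_singleton w.im).ae_notMem volume] with t ht
  have hpos : 0 < |w.im - t| := abs_pos.2 (sub_ne_zero.2 fun h => ht h.symm)
  have him : |w.im - t| ≤ ‖w - t * Complex.I‖ := by
    simpa using Complex.abs_im_le_norm (w - t * Complex.I)
  rw [← Real.posLog_abs (w.im - t)⁻¹, abs_inv]
  exact ENNReal.ofReal_le_ofReal (Real.posLog_le_posLog (by positivity) (by gcongr))

theorem exists_mem_Icc_lintegral_posLog_norm_sub_inv_le {α : Type*} [MeasurableSpace α]
    (μ : Measure α) [IsProbabilityMeasure μ] {F : α → ℂ} (hF : Measurable F) {P : ℝ → Prop}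
    (hP : ∀ᵐ t, P t) : ∃ t ∈ Set.Icc (0 : ℝ) 1, P t ∧
      ∫⁻ x, ENNReal.ofReal (Real.posLog ‖F x - t * Complex.I‖⁻¹) ∂μ ≤
        ∫⁻ s : ℝ, ENNReal.ofReal (Real.posLog s⁻¹) := by
  set G : ℝ → α → ENNReal := fun t x => ENNReal.ofReal (Real.posLog ‖F x - t * Complex.I‖⁻¹)
  set ν : Measure ℝ := volume.restrict (Set.Icc 0 1)
  have : IsProbabilityMeasure ν := ⟨by simp [ν]⟩
  have hG : Measurable (Function.uncurry G) := by
    have hposLog := Real.continuous_posLog.measurable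
    fun_prop
  have hbad : ν {t | ¬(t ∈ Set.Icc 0 1 ∧ P t)} = 0 :=
    ae_iff.1 ((ae_restrict_mem measurableSet_Icc).and (ae_restrict_of_ae hP))
  have htotal : ∫⁻ t, ∫⁻ x, G t x ∂μ ∂ν ≤ ∫⁻ s : ℝ, ENNReal.ofReal (Real.posLog s⁻¹) := calc
    _ = ∫⁻ x, ∫⁻ t, G t x ∂ν ∂μ := lintegral_lintegral_swap hG.aemeasurable
    _ ≤ ∫⁻ _, (∫⁻ s : ℝ, ENNReal.ofReal (Real.posLog s⁻¹)) ∂μ := lintegral_mono fun x =>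
      (lintegral_mono' Measure.restrict_le_self le_rfl).trans (lintegral_posLog_norm_sub_inv_le _)
    _ = ∫⁻ s : ℝ, ENNReal.ofReal (Real.posLog s⁻¹) := by simp
  obtain ⟨t, ht, hle⟩ := exists_notMem_null_le_lintegral
    (hG.lintegral_prod_right' (ν := μ)).aemeasurable hbad
  obtain ⟨htIcc, htP⟩ := not_not.1 ht
  exact ⟨t, htIcc, htP, hle.trans htotal⟩

theorem exists_mem_Icc_circleAverage_posLog_norm_sub_inv_le {f : ℂ → ℂ} {c : ℂ} {R : ℝ}
    (hf : ContinuousOn f (sphere c |R|)) {P : ℝ → Prop} (hP : ∀ᵐ t, P t) :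
    ∃ t ∈ Set.Icc (0 : ℝ) 1, P t ∧
      Real.circleAverage (fun z => Real.posLog ‖f z - t * Complex.I‖⁻¹) c R ≤
        ∫ s : ℝ, Real.posLog s⁻¹ := by
  have hF : Continuous fun φ => f (circleMap c R φ) :=
    hf.comp_continuous (continuous_circleMap c R) (circleMap_mem_sphere' c R)
  set μ : Measure ℝ := volume.restrict (Set.uIoc 0 (2 * Real.pi))
  have : IsFiniteMeasure μ := ⟨by simp [μ, ENNReal.mul_lt_top]⟩
  have : NeZero μ := ⟨by simp [μ, Real.pi_pos, Set.uIoc_of_le Real.two_pi_pos.le]⟩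
  obtain ⟨t, htIcc, htP, hle⟩ :=
    exists_mem_Icc_lintegral_posLog_norm_sub_inv_le ((μ Set.univ)⁻¹ • μ) hF.measurable hP
  refine ⟨t, htIcc, htP, ?_⟩
  have hmeas : Measurable fun φ => Real.posLog ‖f (circleMap c R φ) - t * Complex.I‖⁻¹ :=
    Real.continuous_posLog.measurable.comp (hF.measurable.sub_const _).norm.inv
  rw [Real.circleAverage_eq_intervalAverage, average,
    integral_eq_lintegral_of_nonneg_ae (ae_of_all _ fun _ => Real.posLog_nonneg)
      hmeas.aestronglyMeasurable,
    integral_eq_lintegral_of_nonneg_ae (ae_of_all _ fun _ => Real.posLog_nonneg)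
      integrable_posLog_inv.aestronglyMeasurable]
  exact ENNReal.toReal_mono integrable_posLog_inv.lintegral_lt_top.ne hle

end VerticalTranslate

section CriticalValues

variable {f : ℂ → ℂ} {U : Set ℂ}

theorem eventually_eq_of_deriv_eq_zero {z : ℂ} (hf : AnalyticAt ℂ f z) :
    ∀ᶠ w in nhds z, deriv f w = 0 → f w = f z := by
  rcases hf.deriv.eventually_eq_zero_or_eventually_ne_zero with hzero | hne
  · obtain ⟨ε, hε, hball⟩ := Metric.eventually_nhds_iff_ball.1 (hzero.and hf.eventually_analyticAt)
    filter_upwards [ball_mem_nhds z hε] with w hw _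
    exact isOpen_ball.is_const_of_deriv_eq_zero (convex_ball z ε).isPreconnected
      (fun x hx => (hball x hx).2.differentiableAt.differentiableWithinAt)
      (fun x hx => (hball x hx).1) hw (mem_ball_self hε)
  · filter_upwards [eventually_nhdsWithin_iff.1 hne] with w hw hdw
    by_contra hfw
    exact hw (fun hwz => hfw (congrArg f hwz)) hdw

theorem countable_image_critical_points (hf : AnalyticOnNhd ℂ f U) :
    (f '' {z | z ∈ U ∧ deriv f z = 0}).Countable := by
  obtain ⟨t, -, htc, hst⟩ := TopologicalSpace.countable_cover_nhdsWithin
    (s := {z | z ∈ U ∧ deriv f z = 0}) (f := fun z => {w | f w = f z}) fun z hz => by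
      filter_upwards [(eventually_eq_of_deriv_eq_zero (hf z hz.1)).filter_mono nhdsWithin_le_nhds,
        self_mem_nhdsWithin] with w hw hwS using hw hwS.2
  refine (htc.image f).mono ?_
  rintro _ ⟨z, hz, rfl⟩
  obtain ⟨w, hw, hzw⟩ := Set.mem_iUnion₂.1 (hst hz)
  exact ⟨w, hw, Eq.symm hzw⟩

theorem ae_deriv_ne_zero_of_eq_mul_I (hf : AnalyticOnNhd ℂ f U) :
    ∀ᵐ t : ℝ, ∀ z ∈ U, f z = t * Complex.I → deriv f z ≠ 0 := by
  filter_upwards [((countable_image_critical_points hf).image Complex.im).ae_notMem volume]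
    with t ht z hz hfz hdz
  exact ht ⟨f z, ⟨z, ⟨hz, hdz⟩, rfl⟩, by simp [hfz]⟩

end CriticalValues

section PoissonBounds

variable {c w : ℂ} {R : ℝ}

theorem re_herglotzRieszKernel_nonneg {z : ℂ} (hz : z ∈ sphere c R) (hw : w ∈ ball c R) :
    0 ≤ (herglotzRieszKernel c w z).re := by
  have hwR : 0 < R - ‖w - c‖ := sub_pos.2 (mem_ball_iff_norm.1 hw)
  have hR : 0 < R := pos_of_mem_ball hw
  rw [herglotzRieszKernel_def]
  exact le_trans (by positivity) (le_re_herglotzRieszKernel hz hw)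

theorem circleAverage_re_herglotzRieszKernel_smul_le {u v : ℂ → ℝ} (hw : w ∈ ball c R)
    (hu : CircleIntegrable u c R) (hv : CircleIntegrable v c R)
    (huv : ∀ z ∈ sphere c R, u z ≤ v z) (hv₀ : ∀ z ∈ sphere c R, 0 ≤ v z) :
    Real.circleAverage ((Complex.re ∘ herglotzRieszKernel c w) • u) c R ≤
      (R + ‖w - c‖) / (R - ‖w - c‖) * Real.circleAverage v c R := by
  have hR : 0 < R := pos_of_mem_ball hw
  rw [← smul_eq_mul, ← Real.circleAverage_fun_smul]
  refine Real.circleAverage_mono (hu.continuousOn_smul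
    (Complex.continuous_re.comp_continuousOn (continuousOn_herglotzRieszKernel_sphere hw)))
    hv.const_smul fun z hz => ?_
  rw [abs_of_pos hR] at hz
  have hupper := re_herglotzRieszKernel_le hz hw
  rw [← herglotzRieszKernel_def] at hupper
  calc (herglotzRieszKernel c w z).re * u z
      ≤ (herglotzRieszKernel c w z).re * v z :=
        mul_le_mul_of_nonneg_left (huv z hz) (re_herglotzRieszKernel_nonneg hz hw)
    _ ≤ (R + ‖w - c‖) / (R - ‖w - c‖) * v z := mul_le_mul_of_nonneg_right hupper (hv₀ z hz)

theorem log_norm_le_circleAverage_posLog_norm {h : ℂ → ℂ} (hw : w ∈ ball c R)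
    (hh : AnalyticOnNhd ℂ h (closedBall c R)) (hne : ∀ z ∈ closedBall c R, h z ≠ 0) :
    Real.log ‖h w‖ ≤ (R + ‖w - c‖) / (R - ‖w - c‖) *
      Real.circleAverage (fun z => Real.posLog ‖h z‖) c R := by
  have hharm : InnerProductSpace.HarmonicOnNhd (fun z => Real.log ‖h z‖) (closedBall c R) :=
    fun z hz => (hh z hz).harmonicAt_log_norm (hne z hz)
  have hmero : MeromorphicOn h (sphere c |R|) := by
    rw [abs_of_pos (pos_of_mem_ball hw)]
    exact (hh.mono sphere_subset_closedBall).meromorphicOn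
  rw [← hharm.circleAverage_re_herglotzRieszKernel_smul hw]
  exact circleAverage_re_herglotzRieszKernel_smul_le hw hmero.circleIntegrable_log_norm
    hmero.circleIntegrable_posLog_norm (fun z _ => le_max_right _ _) fun z _ => Real.posLog_nonneg

variable {f : ℂ → ℂ}

/- The real part of the mean value property of `f ^ 2`. -/
theorem circleAverage_norm_sq_le (hf : AnalyticOnNhd ℂ f (closedBall c |R|))
    (him : (f c).im = 0) :
    Real.circleAverage (fun z => ‖f z‖ ^ 2) c R ≤
      2 * Real.circleAverage (fun z => (f z).re ^ 2) c R := by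
  have hcont : ContinuousOn f (sphere c |R|) := hf.continuousOn.mono sphere_subset_closedBall
  have hre : ContinuousOn (fun z => (f z).re) (sphere c |R|) :=
    Complex.continuous_re.comp_continuousOn hcont
  have hmean : Real.circleAverage (fun z => f z ^ 2) c R = f c ^ 2 :=
    ((hf.differentiableOn.fun_pow 2).diffContOnCl_ball subset_rfl).circleAverage
  have hmean_re : Real.circleAverage (fun z => (f z ^ 2).re) c R = (f c ^ 2).re := by
    rw [← hmean]
    exact Complex.reCLM.circleAverage_comp_comm (hcont.pow 2).circleIntegrable'
  have hsplit : (fun z => (f z ^ 2).re) = fun z => (2 : ℝ) • (f z).re ^ 2 - ‖f z‖ ^ 2 := by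
    funext z
    rw [← Complex.normSq_eq_norm_sq, Complex.normSq_apply, sq, Complex.mul_re, smul_eq_mul]
    ring
  have hcenter : (f c ^ 2).re = (f c).re ^ 2 := by rw [sq, Complex.mul_re, him]; ring
  have hre_int : CircleIntegrable (fun z => (2 : ℝ) • (f z).re ^ 2) c R :=
    ((hre.pow 2).const_smul (2 : ℝ)).circleIntegrable'
  have hnorm_int : CircleIntegrable (fun z => ‖f z‖ ^ 2) c R :=
    (hcont.norm.pow 2).circleIntegrable'
  rw [hsplit, hcenter, Real.circleAverage_fun_sub hre_int hnorm_int,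
    Real.circleAverage_fun_smul, smul_eq_mul] at hmean_re
  linarith [sq_nonneg (f c).re]

theorem norm_circleAverage_le {F : ℂ → ℂ} :
    ‖Real.circleAverage F c R‖ ≤ Real.circleAverage (fun z => ‖F z‖) c R := by
  rw [Real.circleAverage_def, Real.circleAverage_def, norm_smul, smul_eq_mul,
    Real.norm_of_nonneg (by positivity)]
  gcongr
  exact intervalIntegral.norm_integral_le_integral_norm Real.two_pi_pos.le

theorem norm_sq_le_circleAverage_re_sq (hw : w ∈ ball c R)
    (hf : AnalyticOnNhd ℂ f (closedBall c R)) (him : (f c).im = 0) :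
    ‖f w‖ ^ 2 ≤ 2 * ((R + ‖w - c‖) / (R - ‖w - c‖)) *
      Real.circleAverage (fun z => (f z).re ^ 2) c R := by
  have hR : 0 < R := pos_of_mem_ball hw
  have hwR : 0 < R - ‖w - c‖ := sub_pos.2 (mem_ball_iff_norm.1 hw)
  have hsq : DiffContOnCl ℂ (fun z => f z ^ 2) (ball c R) :=
    (hf.differentiableOn.fun_pow 2).diffContOnCl_ball subset_rfl
  rw [← abs_of_pos hR] at hf
  have hint : CircleIntegrable (fun z => ‖f z‖ ^ 2) c R :=
    ((hf.continuousOn.mono sphere_subset_closedBall).norm.pow 2).circleIntegrable'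
  calc ‖f w‖ ^ 2
      = ‖Real.circleAverage ((Complex.re ∘ herglotzRieszKernel c w) • fun z => f z ^ 2) c R‖ := by
        rw [hsq.circleAverage_re_herglotzRieszKernel_smul hw, norm_pow]
    _ ≤ Real.circleAverage ((Complex.re ∘ herglotzRieszKernel c w) • fun z => ‖f z‖ ^ 2) c R := by
        refine norm_circleAverage_le.trans_eq (Real.circleAverage_congr_sphere fun z hz => ?_)
        rw [abs_of_pos hR] at hz
        simp only [Pi.smul_apply', Function.comp_apply, norm_smul, norm_pow, smul_eq_mul,
          Real.norm_of_nonneg (re_herglotzRieszKernel_nonneg hz hw)]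
    _ ≤ (R + ‖w - c‖) / (R - ‖w - c‖) * Real.circleAverage (fun z => ‖f z‖ ^ 2) c R :=
        circleAverage_re_herglotzRieszKernel_smul_le hw hint hint (fun _ _ => le_rfl)
          fun _ _ => sq_nonneg _
    _ ≤ (R + ‖w - c‖) / (R - ‖w - c‖) *
          (2 * Real.circleAverage (fun z => (f z).re ^ 2) c R) := by
        gcongr; exact circleAverage_norm_sq_le hf him
    _ = _ := by ring

end PoissonBounds

section Growth

variable {g : ℂ → ℂ} {c : ℂ} {δ r B C : ℝ}

theorem circleAverage_posLog_norm_cofactor_le {h : ℂ → ℂ} {Z : Finset ℂ}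
    (hh : AnalyticOnNhd ℂ h (ball c 1)) (hne : ∀ z ∈ ball c 1, h z ≠ 0)
    (hgh : ∀ z, g z = (∏ w ∈ Z, (z - w)) * h z) (hZ : ∀ x ∈ ball c 1, ∀ w ∈ Z, ‖x - w‖ ≤ 2)
    (hδ : 0 < δ) (hδ₁ : δ < 1) (hB : ∀ z ∈ sphere c δ, Real.log ‖g z‖ ≤ B)
    (hr₀ : 0 < r) (hr : r < 1)
    (hC : Real.circleAverage (fun z => Real.posLog ‖g z‖⁻¹) c r ≤ C) :
    Real.circleAverage (fun x => Real.posLog ‖h x‖) c r ≤ B + Z.card * Real.log (2 / δ) + C := by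
  have hsub : ∀ s, 0 < s → s < 1 → closedBall c |s| ⊆ ball c 1 := fun s hs hs₁ => by
    rw [abs_of_pos hs]
    exact closedBall_subset_ball hs₁
  have hcentre : Real.log ‖h c‖ ≤ B - Z.card * Real.log δ :=
    log_norm_cofactor_le hδ.ne' (hh.mono (hsub δ hδ hδ₁)) (fun x hx => hne x (hsub δ hδ hδ₁ hx))
      hgh (by rwa [abs_of_pos hδ])
  have hsplit := circleAverage_posLog_norm_of_ne_zero (hh.mono (hsub r hr₀ hr))
    fun x hx => hne x (hsub r hr₀ hr hx)
  have hinv := circleAverage_posLog_norm_inv_cofactor_le (B := Real.log 2) hr₀.ne'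
    (hh.mono (sphere_subset_closedBall.trans (hsub r hr₀ hr))).meromorphicOn hgh
    fun x hx w hw => by
      rw [← Real.posLog_eq_log (by norm_num)]
      exact Real.posLog_le_posLog (norm_nonneg _)
        (hZ x (hsub r hr₀ hr (sphere_subset_closedBall hx)) w hw)
  rw [Real.log_div two_ne_zero hδ.ne', mul_sub]
  linarith

/-- Divide out the zeros: at the centre, Jensen's formula on a small circle bounds the cofactor
from above, which bounds the mean of its negative logarithm, hence of its positive logarithm, on a
large circle, and the Poisson formula bounds the cofactor inside. -/
theorem norm_le_of_simple_zeros {Z : Finset ℂ} (hg : DifferentiableOn ℂ g (ball c 1))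
    (hZ : ∀ z, z ∈ Z ↔ z ∈ ball c 1 ∧ g z = 0) (hsimple : ∀ z ∈ Z, deriv g z ≠ 0)
    (hδ : 0 < δ) (hδ₁ : δ < 1) (hB : ∀ z ∈ sphere c δ, Real.log ‖g z‖ ≤ B) (hr : r < 1)
    (hC : Real.circleAverage (fun z => Real.posLog ‖g z‖⁻¹) c r ≤ C) {z : ℂ} (hz : z ∈ ball c r) :
    ‖g z‖ ≤ 2 ^ Z.card * Real.exp ((r + ‖z - c‖) / (r - ‖z - c‖) *
      (B + Z.card * Real.log (2 / δ) + C)) := by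
  have hr₀ : 0 < r := pos_of_mem_ball hz
  have hzr : 0 < r - ‖z - c‖ := sub_pos.2 (mem_ball_iff_norm.1 hz)
  have hz₁ : z ∈ ball c 1 := ball_subset_ball hr.le hz
  have hsub : closedBall c r ⊆ ball c 1 := closedBall_subset_ball hr
  obtain ⟨h, hh, hne, hgh⟩ := exists_eq_prod_sub_mul_ne_zero isOpen_ball hg hZ hsimple
  have han : AnalyticOnNhd ℂ h (ball c 1) := hh.analyticOnNhd isOpen_ball
  have hdist : ∀ x ∈ ball c 1, ∀ w ∈ Z, ‖x - w‖ ≤ 2 := fun x hx w hw => by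
    rw [← dist_eq_norm]
    have hxc := mem_ball.1 hx
    have hwc := mem_ball'.1 ((hZ w).1 hw).1
    linarith [dist_triangle x c w]
  rw [hgh z, norm_mul, norm_prod]
  gcongr
  · exact (Finset.prod_le_prod (fun _ _ => norm_nonneg _) (hdist z hz₁)).trans_eq
      (Finset.prod_const 2)
  · rw [← Real.log_le_iff_le_exp (norm_pos_iff.2 (hne z hz₁))]
    refine (log_norm_le_circleAverage_posLog_norm hz (han.mono hsub)
      fun x hx => hne x (hsub hx)).trans ?_
    gcongr
    exact circleAverage_posLog_norm_cofactor_le han hne hgh hdist hδ hδ₁ hB hr₀ hr hC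

theorem pow_mul_exp_div_mul_le {m p : ℕ} {a ρ R : ℝ} (hmp : m ≤ p) (ha : 0 ≤ a) (hB : 0 ≤ B)
    (hC : 0 ≤ C) (hρ : 0 ≤ ρ) (hρR : ρ ≤ R) (hRr : R < r) :
    2 ^ m * Real.exp ((r + ρ) / (r - ρ) * (B + m * a + C)) ≤
      2 ^ p * Real.exp ((r + R) / (r - R) * (B + p * a + C)) := by
  have hadd : 0 ≤ r + R := by linarith
  gcongr
  exact one_le_two

theorem exists_norm_le_of_encard_level_le (p : ℕ) {R : ℝ} (hδ : 0 < δ) (hδ₁ : δ < 1)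
    (hR : R < 1) :
    ∃ M > 0, ∀ f : ℂ → ℂ, AnalyticOnNhd ℂ f (ball c 1) →
      (∀ᵐ t : ℝ, {z | z ∈ ball c 1 ∧ f z = t * Complex.I}.encard ≤ p) →
      (∀ z ∈ sphere c δ, ‖f z‖ ≤ 1) → ∀ z ∈ closedBall c R, ‖f z‖ ≤ M := by
  obtain ⟨r, hr, hr₁⟩ : ∃ r, max R 0 < r ∧ r < 1 := exists_between (max_lt hR one_pos)
  obtain ⟨hRr, hr₀⟩ := max_lt_iff.1 hr
  refine ⟨2 ^ p * Real.exp ((r + R) / (r - R) *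
    (Real.log 2 + p * Real.log (2 / δ) + ∫ s : ℝ, Real.posLog s⁻¹)) + 1, by positivity,
    fun f hf hcard hfδ z hz => ?_⟩
  have hzR : ‖z - c‖ ≤ R := mem_closedBall_iff_norm.1 hz
  obtain ⟨t, ht, ⟨hcard, hsimple⟩, hmean⟩ := exists_mem_Icc_circleAverage_posLog_norm_sub_inv_le
    (c := c) (R := r) (hf.continuousOn.mono (by
      rw [abs_of_pos hr₀]; exact sphere_subset_closedBall.trans (closedBall_subset_ball hr₁)))
    (hcard.and (ae_deriv_ne_zero_of_eq_mul_I hf))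
  have htI : ‖(t * Complex.I : ℂ)‖ ≤ 1 := by simpa [abs_of_nonneg ht.1] using ht.2
  obtain ⟨Z, hZ⟩ := (Set.finite_of_encard_le_coe hcard).exists_finset_coe
  have hZp : Z.card ≤ p := by rwa [← hZ, Set.encard_coe_eq_coe_finsetCard, Nat.cast_le] at hcard
  have hmemZ : ∀ w, w ∈ Z ↔ w ∈ ball c 1 ∧ f w - t * Complex.I = 0 := fun w => by
    rw [← Finset.mem_coe, hZ, sub_eq_zero]; rfl
  have hsimple' : ∀ w ∈ Z, deriv (fun z => f z - t * Complex.I) w ≠ 0 := fun w hw => by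
    rw [deriv_sub_const]
    exact hsimple w ((hmemZ w).1 hw).1 (sub_eq_zero.1 ((hmemZ w).1 hw).2)
  have hlog : ∀ w ∈ sphere c δ, Real.log ‖f w - t * Complex.I‖ ≤ Real.log 2 := fun w hw => by
    rw [← Real.posLog_eq_log (x := 2) (by norm_num)]
    exact (le_max_right _ _).trans (Real.posLog_le_posLog (norm_nonneg _)
      ((norm_sub_le _ _).trans (by linarith [hfδ w hw])))
  calc ‖f z‖ ≤ ‖f z - t * Complex.I‖ + ‖(t * Complex.I : ℂ)‖ := norm_le_norm_sub_add _ _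
    _ ≤ _ := add_le_add ((norm_le_of_simple_zeros (hf.differentiableOn.sub_const _) hmemZ hsimple'
        hδ hδ₁ hlog hr₁ hmean (mem_ball_iff_norm.2 (hzR.trans_lt hRr))).trans
      (pow_mul_exp_div_mul_le hZp (Real.log_nonneg (by rw [le_div_iff₀ hδ]; linarith))
        (Real.log_nonneg one_le_two) (integral_nonneg fun _ => Real.posLog_nonneg)
        (norm_nonneg _) hzR hRr)) htI

end Growth

section NodalGrowth

variable {f : ℂ → ℂ} {k : ℕ}

theorem ae_encard_level_le (hf : AnalyticOnNhd ℂ f (ball 0 1))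
    (hk : (nodalComponents {z | z ∈ ball 0 1 ∧ (f z).re ≠ 0}).encard ≤ k) :
    ∀ᵐ t : ℝ, {z | z ∈ ball 0 1 ∧ f z = t * Complex.I}.encard ≤ (k ^ 2 : ℕ) := by
  filter_upwards [ae_deriv_ne_zero_of_eq_mul_I hf] with t ht
  push_cast
  exact (encard_level_le_encard_nodalComponents_sq hf (by simp) ht).trans (by gcongr)

theorem exists_norm_le_mul_of_encard_nodalComponents_le (k : ℕ) {δ R : ℝ} (hδ : 0 < δ)
    (hδ₁ : δ < 1) (hR : R < 1) :
    ∃ M > 0, ∀ f : ℂ → ℂ, AnalyticOnNhd ℂ f (ball 0 1) →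
      (nodalComponents {z | z ∈ ball 0 1 ∧ (f z).re ≠ 0}).encard ≤ k →
      ∀ A, (∀ z ∈ sphere 0 δ, ‖f z‖ ≤ A) → ∀ z ∈ closedBall 0 R, ‖f z‖ ≤ M * A := by
  obtain ⟨M, hM, hbound⟩ := exists_norm_le_of_encard_level_le (c := 0) (k ^ 2) hδ hδ₁ hR
  refine ⟨M, hM, fun f hf hk A hA z hz => ?_⟩
  have hA₀ : 0 ≤ A := (norm_nonneg _).trans (hA δ (by simp [abs_of_pos hδ]))
  have hpos : ∀ B, A < B → ‖f z‖ ≤ M * B := fun B hAB => by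
    have hB : 0 < B := hA₀.trans_lt hAB
    have hnorm : ∀ w, ‖(B⁻¹ : ℂ) * f w‖ = ‖f w‖ / B := fun w => by
      rw [norm_mul, norm_inv, Complex.norm_real, Real.norm_of_nonneg hB.le, inv_mul_eq_div]
    have hnodal : {w | w ∈ ball 0 1 ∧ ((B⁻¹ : ℂ) * f w).re ≠ 0} =
        {w | w ∈ ball 0 1 ∧ (f w).re ≠ 0} := by
      simp only [← Complex.ofReal_inv, Complex.re_ofReal_mul, mul_ne_zero_iff, ne_eq,
        inv_eq_zero, hB.ne', not_false_eq_true, true_and]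
    have := hbound (fun w => (B⁻¹ : ℂ) * f w) (analyticOnNhd_const.mul hf)
      (ae_encard_level_le (analyticOnNhd_const.mul hf) (by rwa [hnodal]))
      (fun w hw => by rw [hnorm, div_le_one hB]; exact (hA w hw).trans hAB.le) z hz
    rwa [hnorm, div_le_iff₀ hB] at this
  rw [← div_le_iff₀' hM]
  exact le_of_forall_gt_imp_ge_of_dense fun B hAB => (div_le_iff₀' hM).2 (hpos B hAB)

theorem exists_norm_deriv_sq_le_circleAverage_re_sq (k : ℕ) {θ : ℝ} (hθ : 0 < θ) (hθ₁ : θ < 1) :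
    ∃ C > 0, ∀ f : ℂ → ℂ, AnalyticOnNhd ℂ f (ball 0 1) → (f 0).im = 0 →
      (nodalComponents {z | z ∈ ball 0 1 ∧ (f z).re ≠ 0}).encard ≤ k →
      ∀ z ∈ ball 0 θ,
        ‖deriv f z‖ ^ 2 ≤ C * Real.circleAverage (fun z => (f z).re ^ 2) 0 θ := by
  obtain ⟨R, hθR, hR⟩ := exists_between hθ₁
  obtain ⟨M, hM, hgrowth⟩ := exists_norm_le_mul_of_encard_nodalComponents_le k
    (half_pos hθ) ((half_lt_self hθ).trans hθ₁) hR
  have hRθ : 0 < R - θ := sub_pos.2 hθR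
  refine ⟨6 * (M / (R - θ)) ^ 2, by positivity, fun f hf him hk z hz => ?_⟩
  set S := Real.circleAverage (fun z => (f z).re ^ 2) 0 θ
  have hS : 0 ≤ S := Real.circleAverage_nonneg_of_nonneg fun _ _ => sq_nonneg _
  have hinner : ∀ w ∈ sphere 0 (θ / 2), ‖f w‖ ≤ √(6 * S) := fun w hw => by
    have hwθ : ‖w‖ = θ / 2 := mem_sphere_zero_iff_norm.1 hw
    have hratio : 2 * ((θ + ‖w - 0‖) / (θ - ‖w - 0‖)) = 6 := by
      rw [sub_zero, hwθ]
      field_simp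
      norm_num
    rw [← hratio]
    exact Real.le_sqrt_of_sq_le (norm_sq_le_circleAverage_re_sq
      (mem_ball_zero_iff.2 (by rw [hwθ]; linarith)) (hf.mono (closedBall_subset_ball hθ₁)) him)
  have hsub : closedBall z (R - θ) ⊆ closedBall 0 R :=
    closedBall_subset_closedBall' (by linarith [mem_ball.1 hz])
  have hcauchy : ‖deriv f z‖ ≤ M * √(6 * S) / (R - θ) :=
    Complex.norm_deriv_le_of_forall_mem_sphere_norm_le hRθ
      (hf.differentiableOn.diffContOnCl_ball (hsub.trans (closedBall_subset_ball hR)))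
      fun w hw => hgrowth f hf hk _ hinner w (hsub (sphere_subset_closedBall hw))
  calc ‖deriv f z‖ ^ 2 ≤ (M * √(6 * S) / (R - θ)) ^ 2 := by gcongr
    _ = (M / (R - θ)) ^ 2 * √(6 * S) ^ 2 := by ring
    _ = 6 * (M / (R - θ)) ^ 2 * S := by rw [Real.sq_sqrt (by positivity)]; ring

end NodalGrowth

section Arclength

variable {c : ℂ} {R : ℝ}

theorem map_restrict_le_smul_hausdorffMeasure_image {X : Type*} [MetricSpace X]
    [MeasurableSpace X] [BorelSpace X] {γ : ℝ → X} (hγ : Measurable γ) {s : Set ℝ} {K : NNReal}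
    (hanti : AntilipschitzWith K (s.domRestrict γ)) :
    Measure.map γ (volume.restrict s) ≤ (K : ENNReal) • μH[1].restrict (γ '' s) := by
  refine Measure.le_iff.2 fun t ht => ?_
  rw [Measure.map_apply hγ ht, Measure.restrict_apply (hγ ht), Measure.smul_apply,
    Measure.restrict_apply ht, smul_eq_mul, ← hausdorffMeasure_real, Set.inter_comm,
    ← Subtype.image_preimage_coe,
    isometry_subtype_coe.hausdorffMeasure_image (Or.inl zero_le_one)]
  calc μH[1] (((↑) : s → ℝ) ⁻¹' (γ ⁻¹' t)) ≤ μH[1] (s.domRestrict γ ⁻¹' (t ∩ γ '' s)) :=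
        measure_mono fun x hx => ⟨hx, Set.mem_image_of_mem γ x.2⟩
    _ ≤ (K : ENNReal) * μH[1] (t ∩ γ '' s) := by
        simpa using hanti.hausdorffMeasure_preimage_le zero_le_one (t ∩ γ '' s)

theorem abs_sub_le_mul_norm_circleMap_sub (hR : 0 < R) {φ ψ : ℝ} (h : |φ - ψ| < Real.pi) :
    |φ - ψ| ≤ Real.pi / (2 * R) * ‖circleMap c R φ - circleMap c R ψ‖ := by
  have hangle : InnerProductGeometry.angle (Complex.exp (φ * Complex.I))
      (Complex.exp (ψ * Complex.I)) = |φ - ψ| := by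
    rw [Complex.angle_exp_exp, (toIocMod_eq_self Real.two_pi_pos).2]
    exact ⟨(abs_lt.1 h).1, by linarith [(abs_lt.1 h).2]⟩
  have hnorm : ‖circleMap c R φ - circleMap c R ψ‖ =
      R * ‖Complex.exp (φ * Complex.I) - Complex.exp (ψ * Complex.I)‖ := by
    rw [circleMap, circleMap, add_sub_add_left_eq_sub, ← mul_sub, norm_mul, Complex.norm_real,
      Real.norm_of_nonneg hR.le]
  calc |φ - ψ| ≤ Real.pi / 2 * ‖Complex.exp (φ * Complex.I) - Complex.exp (ψ * Complex.I)‖ := by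
        rw [← hangle]
        exact Complex.angle_le_mul_norm_sub (Complex.norm_exp_ofReal_mul_I _)
          (Complex.norm_exp_ofReal_mul_I _)
    _ = Real.pi / (2 * R) * ‖circleMap c R φ - circleMap c R ψ‖ := by
        rw [hnorm]
        field_simp

theorem map_circleMap_restrict_half_le (hR : 0 < R) (a : ℝ) :
    Measure.map (circleMap c R) (volume.restrict (Set.Ioc a (a + Real.pi))) ≤
      ENNReal.ofReal (Real.pi / (2 * R)) • μH[1].restrict (sphere c R) := by
  have hanti : AntilipschitzWith (Real.pi / (2 * R)).toNNReal
      ((Set.Ioc a (a + Real.pi)).domRestrict (circleMap c R)) :=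
    AntilipschitzWith.of_le_mul_dist fun ⟨φ, hφ⟩ ⟨ψ, hψ⟩ => by
      rw [Subtype.dist_eq, Real.dist_eq, Real.coe_toNNReal _ (by positivity), dist_eq_norm]
      exact abs_sub_le_mul_norm_circleMap_sub hR
        (abs_lt.2 ⟨by linarith [hφ.1, hψ.2], by linarith [hφ.2, hψ.1]⟩)
  refine (map_restrict_le_smul_hausdorffMeasure_image
    (continuous_circleMap c R).measurable hanti).trans ?_
  have himage : circleMap c R '' Set.Ioc a (a + Real.pi) ⊆ sphere c R :=
    Set.image_subset_iff.2 fun φ _ => circleMap_mem_sphere c hR.le φ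
  exact smul_le_smul_left _ (Measure.restrict_mono_set _ himage)

theorem map_circleMap_restrict_le (hR : 0 < R) :
    Measure.map (circleMap c R) (volume.restrict (Set.Ioc 0 (2 * Real.pi))) ≤
      ENNReal.ofReal (Real.pi / R) • μH[1].restrict (sphere c R) := by
  have hsplit : Set.Ioc 0 (2 * Real.pi) =
      Set.Ioc 0 (0 + Real.pi) ∪ Set.Ioc (0 + Real.pi) (0 + Real.pi + Real.pi) := by
    rw [Set.Ioc_union_Ioc_eq_Ioc (by linarith [Real.pi_pos]) (by linarith [Real.pi_pos])]
    ring_nf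
  have hsum : ENNReal.ofReal (Real.pi / R) =
      ENNReal.ofReal (Real.pi / (2 * R)) + ENNReal.ofReal (Real.pi / (2 * R)) := by
    rw [← ENNReal.ofReal_add (by positivity) (by positivity)]
    congr 1
    field_simp
    norm_num
  rw [hsplit, hsum, add_smul, Measure.restrict_union
    (Set.Ioc_disjoint_Ioc_of_le le_rfl) measurableSet_Ioc,
    Measure.map_add _ _ (continuous_circleMap c R).measurable]
  exact add_le_add (map_circleMap_restrict_half_le hR _) (map_circleMap_restrict_half_le hR _)

theorem hausdorffMeasure_one_sphere_lt_top : μH[1] (sphere c R) < ⊤ := by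
  rcases lt_or_ge R 0 with hR | hR
  · simp [sphere_eq_empty_of_neg hR]
  rw [← abs_of_nonneg hR, ← image_circleMap_Ioc]
  refine ((lipschitzWith_circleMap c R).hausdorffMeasure_image_le zero_le_one _).trans_lt ?_
  rw [ENNReal.rpow_one, hausdorffMeasure_real, Real.volume_Ioc]
  exact ENNReal.mul_lt_top ENNReal.coe_lt_top ENNReal.ofReal_lt_top

theorem circleAverage_le_setIntegral_sphere (hR : 0 < R) {v : ℂ → ℝ}
    (hv : ContinuousOn v (sphere c R)) (hv₀ : ∀ z ∈ sphere c R, 0 ≤ v z) :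
    Real.circleAverage v c R ≤ 1 / (2 * R) * ∫ z in sphere c R, v z ∂μH[1] := by
  have hle := map_circleMap_restrict_le (c := c) hR
  have hae : ∀ᵐ z ∂ENNReal.ofReal (Real.pi / R) • μH[1].restrict (sphere c R), 0 ≤ v z :=
    Measure.ae_smul_measure (ae_restrict_of_forall_mem isClosed_sphere.measurableSet hv₀) _
  have hint : Integrable v (ENNReal.ofReal (Real.pi / R) • μH[1].restrict (sphere c R)) := by
    have : IsFiniteMeasure (μH[1].restrict (sphere c R)) :=
      isFiniteMeasure_restrict.2 hausdorffMeasure_one_sphere_lt_top.ne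
    obtain ⟨B, hB⟩ := (isCompact_sphere c R).exists_bound_of_continuousOn hv
    exact (Integrable.of_bound (hv.aestronglyMeasurable isClosed_sphere.measurableSet) B
      (ae_restrict_of_forall_mem isClosed_sphere.measurableSet hB)).smul_measure
        ENNReal.ofReal_ne_top
  calc Real.circleAverage v c R
      = (2 * Real.pi)⁻¹ * ∫ z, v z ∂Measure.map (circleMap c R)
          (volume.restrict (Set.Ioc 0 (2 * Real.pi))) := by
        rw [Real.circleAverage_def, smul_eq_mul,
          intervalIntegral.integral_of_le Real.two_pi_pos.le,
          integral_map (continuous_circleMap c R).aemeasurable (hint.mono_measure hle).1]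
    _ ≤ (2 * Real.pi)⁻¹ * (Real.pi / R * ∫ z in sphere c R, v z ∂μH[1]) := by
        refine mul_le_mul_of_nonneg_left ?_ (by positivity)
        refine (integral_mono_measure hle hae hint).trans_eq ?_
        rw [integral_smul_measure, ENNReal.toReal_ofReal (by positivity), smul_eq_mul]
    _ = 1 / (2 * R) * ∫ z in sphere c R, v z ∂μH[1] := by field_simp

end Arclength

section LinearIsometry

variable {E F : Type*} [NormedAddCommGroup E] [InnerProductSpace ℝ E]
  [NormedAddCommGroup F] [InnerProductSpace ℝ F]

theorem norm_gradient_comp_linearIsometryEquiv [CompleteSpace E] [CompleteSpace F]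
    (e : E ≃ₗᵢ[ℝ] F) (u : F → ℝ) (x : E) :
    ‖gradient (u ∘ e) x‖ = ‖gradient u (e x)‖ := by
  rw [gradient, gradient, LinearIsometryEquiv.norm_map, LinearIsometryEquiv.norm_map]
  exact (congrArg norm (e.toContinuousLinearEquiv.comp_right_fderiv (f := u))).trans
    ((fderiv ℝ u (e x)).opNorm_comp_linearIsometryEquiv e)

theorem laplacian_comp_linearIsometryEquiv [FiniteDimensional ℝ E] [FiniteDimensional ℝ F]
    (e : E ≃ₗᵢ[ℝ] F) (u : F → ℝ) (x : E) :
    Laplacian.laplacian (u ∘ e) x = Laplacian.laplacian u (e x) := by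
  have hcomp : iteratedFDeriv ℝ 2 (u ∘ e) x = (iteratedFDeriv ℝ 2 u (e x)).compContinuousLinearMap
      fun _ => (e.toContinuousLinearEquiv : E →L[ℝ] F) := by
    have := e.toContinuousLinearEquiv.iteratedFDerivWithin_comp_right u uniqueDiffOn_univ
      (Set.mem_univ (e x)) 2
    rwa [Set.preimage_univ, iteratedFDerivWithin_univ, iteratedFDerivWithin_univ] at this
  set b := stdOrthonormalBasis ℝ E
  rw [InnerProductSpace.laplacian_eq_iteratedFDeriv_orthonormalBasis _ b,
    InnerProductSpace.laplacian_eq_iteratedFDeriv_orthonormalBasis _ (b.map e)]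
  refine Finset.sum_congr rfl fun i _ => ?_
  rw [hcomp, ContinuousMultilinearMap.compContinuousLinearMap_apply]
  congr 1
  ext j
  fin_cases j <;> simp

theorem lapl_eq_laplacian {n : ℕ} {u : EuclideanSpace ℝ (Fin n) → ℝ}
    {x : EuclideanSpace ℝ (Fin n)} (hu : ContDiffAt ℝ 2 u x) :
    lapl u x = Laplacian.laplacian u x := by
  have hfderiv : DifferentiableAt ℝ (fderiv ℝ u) x :=
    (hu.fderiv_right (m := 1) (by norm_num)).differentiableAt (by norm_num)
  rw [InnerProductSpace.laplacian_eq_iteratedFDeriv_orthonormalBasis u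
    (EuclideanSpace.basisFun (Fin n) ℝ)]
  refine Finset.sum_congr rfl fun i _ => ?_
  rw [iteratedFDeriv_two_apply, fderiv_clm_apply hfderiv (differentiableAt_const _)]
  simp

theorem HarmonicFnOn.harmonicOnNhd {n : ℕ} {u : EuclideanSpace ℝ (Fin n) → ℝ}
    {Ω : Set (EuclideanSpace ℝ (Fin n))} (hu : HarmonicFnOn u Ω) (hΩ : IsOpen Ω) :
    InnerProductSpace.HarmonicOnNhd u Ω := by
  have hcontDiff : ∀ x ∈ Ω, ContDiffAt ℝ 2 u x := fun x hx => hu.1.contDiffAt (hΩ.mem_nhds hx)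
  refine fun x hx => ⟨hcontDiff x hx, ?_⟩
  filter_upwards [hΩ.mem_nhds hx] with y hy
  rw [← lapl_eq_laplacian (hcontDiff y hy), hu.2 y hy, Pi.zero_apply]

theorem harmonicAt_comp_linearIsometryEquiv [FiniteDimensional ℝ E] [FiniteDimensional ℝ F]
    (e : E ≃ₗᵢ[ℝ] F) {u : F → ℝ} {x : E} (hu : InnerProductSpace.HarmonicAt u (e x)) :
    InnerProductSpace.HarmonicAt (u ∘ e) x := by
  refine ⟨hu.1.comp x e.contDiff.contDiffAt, ?_⟩
  filter_upwards [e.continuous.continuousAt.eventually hu.2] with y hy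
  rw [laplacian_comp_linearIsometryEquiv, hy, Pi.zero_apply, Pi.zero_apply]

theorem norm_gradient_re_le {f : ℂ → ℂ} {z : ℂ} (hf : DifferentiableAt ℂ f z) :
    ‖gradient (fun w => (f w).re) z‖ ≤ ‖deriv f z‖ := by
  have hderiv : HasFDerivAt (fun w => (f w).re)
      (Complex.reCLM.comp (deriv f z • (1 : ℂ →L[ℝ] ℂ))) z :=
    Complex.reCLM.hasFDerivAt.comp z hf.hasDerivAt.complexToReal_fderiv
  rw [gradient, LinearIsometryEquiv.norm_map, hderiv.fderiv]
  refine ContinuousLinearMap.opNorm_le_bound _ (norm_nonneg _) fun w => ?_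
  exact (Complex.abs_re_le_norm (deriv f z • w)).trans_eq (norm_smul _ _)

theorem encard_nodalComponents_image {X Y : Type*} [TopologicalSpace X] [TopologicalSpace Y]
    (h : X ≃ₜ Y) (S : Set X) :
    (nodalComponents (h '' S)).encard = (nodalComponents S).encard := by
  have himage : nodalComponents (h '' S) = (fun C => h '' C) '' nodalComponents S := by
    ext C
    constructor
    · rintro ⟨_, ⟨x, hx, rfl⟩, rfl⟩
      exact ⟨_, ⟨x, hx, rfl⟩, h.image_connectedComponentIn hx⟩
    · rintro ⟨_, ⟨x, hx, rfl⟩, rfl⟩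
      exact ⟨h x, ⟨x, hx, rfl⟩, (h.image_connectedComponentIn hx).symm⟩
  rw [himage, h.injective.image_injective.encard_image]

end LinearIsometry

section Frequency

variable {u : EuclideanSpace ℝ (Fin 2) → ℝ}

theorem HInt_two (u : EuclideanSpace ℝ (Fin 2) → ℝ) (x₀ : EuclideanSpace ℝ (Fin 2)) (r : ℝ) :
    HInt u x₀ r = ∫ x in sphere x₀ r, u x ^ 2 ∂μH[1] := by
  unfold HInt
  norm_num

theorem circleAverage_comp_sq_le_HInt (e : ℂ ≃ₗᵢ[ℝ] EuclideanSpace ℝ (Fin 2)) {θ : ℝ} (hθ : 0 < θ)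
    (hu : ContinuousOn u (sphere 0 θ)) :
    Real.circleAverage (fun z => u (e z) ^ 2) 0 θ ≤ 1 / (2 * θ) * HInt u 0 θ := by
  have hsphere : e ⁻¹' sphere 0 θ = sphere 0 θ := by rw [e.preimage_sphere, map_zero]
  have hcont : ContinuousOn (fun z => u (e z) ^ 2) (sphere 0 θ) :=
    (hu.comp e.continuous.continuousOn (hsphere ▸ Set.mapsTo_preimage _ _)).pow 2
  refine (circleAverage_le_setIntegral_sphere hθ hcont fun z _ => sq_nonneg _).trans_eq ?_
  rw [HInt_two, ← hsphere]
  congr 1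
  exact (e.toIsometryEquiv.measurePreserving_hausdorffMeasure 1).setIntegral_preimage_emb
    e.toHomeomorph.measurableEmbedding (fun x => u x ^ 2) _

theorem HarmonicFnOn.exists_analyticOnNhd_re_eq (hu : HarmonicFnOn u (ball 0 1))
    (e : ℂ ≃ₗᵢ[ℝ] EuclideanSpace ℝ (Fin 2)) :
    ∃ f : ℂ → ℂ, AnalyticOnNhd ℂ f (ball 0 1) ∧ (f 0).im = 0 ∧
      ∀ z ∈ ball 0 1, (f z).re = u (e z) := by
  have hharm : InnerProductSpace.HarmonicOnNhd (u ∘ e) (ball 0 1) := fun z hz =>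
    harmonicAt_comp_linearIsometryEquiv e
      (hu.harmonicOnNhd isOpen_ball _ (by simpa using hz))
  obtain ⟨F, hF, hre⟩ := hharm.exists_analyticOnNhd_ball_re_eq
  refine ⟨fun z => F z - (F 0).im * Complex.I, hF.sub analyticOnNhd_const, by simp, fun z hz => ?_⟩
  simpa using hre hz

theorem encard_nodalComponents_re_eq {f : ℂ → ℂ} {e : ℂ ≃ₗᵢ[ℝ] EuclideanSpace ℝ (Fin 2)}
    (hre : ∀ z ∈ ball 0 1, (f z).re = u (e z)) :
    (nodalComponents {z | z ∈ ball 0 1 ∧ (f z).re ≠ 0}).encard =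
      (nodalComponents {x | x ∈ ball 0 1 ∧ u x ≠ 0}).encard := by
  rw [← encard_nodalComponents_image e.toHomeomorph]
  congr 2
  refine (e.toEquiv.image_eq_preimage_symm _).trans (Set.ext fun x => ?_)
  have hball : e.symm x ∈ ball 0 1 ↔ x ∈ ball 0 1 := by simp
  refine (and_congr_right fun hx => ?_).trans (and_congr_left' hball)
  exact iff_of_eq (congrArg (· ≠ 0) ((hre _ hx).trans (congrArg u (e.apply_symm_apply x))))

theorem norm_gradient_le_of_re_eq {f : ℂ → ℂ} (hf : AnalyticOnNhd ℂ f (ball 0 1))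
    {e : ℂ ≃ₗᵢ[ℝ] EuclideanSpace ℝ (Fin 2)} (hre : ∀ z ∈ ball 0 1, (f z).re = u (e z))
    {z : ℂ} (hz : z ∈ ball 0 1) :
    ‖gradient u (e z)‖ ≤ ‖deriv f z‖ := by
  have heq : (fun w => (f w).re) =ᶠ[nhds z] u ∘ e :=
    eventually_of_mem (isOpen_ball.mem_nhds hz) hre
  rw [← norm_gradient_comp_linearIsometryEquiv, ← heq.gradient_eq]
  exact norm_gradient_re_le (hf z hz).differentiableAt

end Frequency

theorem T_subset_S_general (k₀ : ℕ) (θ : ℝ) (hθ : θ ∈ Set.Ioo (0 : ℝ) 1) :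
    ∃ N₀ : ℝ, 0 < N₀ ∧ ∀ u : EuclideanSpace ℝ (Fin 2) → ℝ, HarmonicFnOn u (ball 0 1) →
      (nodalComponents {x | x ∈ ball 0 1 ∧ u x ≠ 0}).encard ≤ k₀ →
      θ * DInt u 0 θ ≤ N₀ * HInt u 0 θ := by
  obtain ⟨hθ₀, hθ₁⟩ := hθ
  obtain ⟨C, hC, hderiv⟩ := exists_norm_deriv_sq_le_circleAverage_re_sq k₀ hθ₀ hθ₁
  set e := Complex.orthonormalBasisOneI.repr
  set V := volume.real (ball (0 : EuclideanSpace ℝ (Fin 2)) θ)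
  have hV : 0 < V :=
    ENNReal.toReal_pos (measure_ball_pos _ _ hθ₀).ne' measure_ball_lt_top.ne
  refine ⟨C * V / 2, by positivity, fun u hu hk => ?_⟩
  obtain ⟨f, hf, him, hre⟩ := hu.exists_analyticOnNhd_re_eq e
  have hsphere : sphere (0 : ℂ) |θ| ⊆ ball 0 1 := by
    rw [abs_of_pos hθ₀]
    exact sphere_subset_closedBall.trans (closedBall_subset_ball hθ₁)
  have hmean : Real.circleAverage (fun z => (f z).re ^ 2) 0 θ ≤ 1 / (2 * θ) * HInt u 0 θ := by
    rw [Real.circleAverage_congr_sphere (f₂ := fun z => u (e z) ^ 2) fun z hz => by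
      simp only [hre z (hsphere hz)]]
    exact circleAverage_comp_sq_le_HInt e hθ₀ (hu.1.continuousOn.mono
      (sphere_subset_closedBall.trans (closedBall_subset_ball hθ₁)))
  have hgradient : ∀ x ∈ ball 0 θ, ‖gradient u x‖ ^ 2 ≤ C * (1 / (2 * θ) * HInt u 0 θ) :=
    fun x hx => by
    have hz : e.symm x ∈ ball 0 θ := by simpa using hx
    calc ‖gradient u x‖ ^ 2 = ‖gradient u (e (e.symm x))‖ ^ 2 := by rw [e.apply_symm_apply]
      _ ≤ ‖deriv f (e.symm x)‖ ^ 2 := by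
        gcongr
        exact norm_gradient_le_of_re_eq hf hre (ball_subset_ball hθ₁.le hz)
      _ ≤ C * Real.circleAverage (fun z => (f z).re ^ 2) 0 θ :=
        hderiv f hf him ((encard_nodalComponents_re_eq hre).trans_le hk) _ hz
      _ ≤ C * (1 / (2 * θ) * HInt u 0 θ) := by gcongr
  have hDInt : DInt u 0 θ ≤ C * (1 / (2 * θ) * HInt u 0 θ) * V :=
    (le_abs_self _).trans (norm_setIntegral_le_of_norm_le_const measure_ball_lt_top
      fun x hx => (Real.norm_of_nonneg (sq_nonneg _)).trans_le (hgradient x hx))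
  calc θ * DInt u 0 θ ≤ θ * (C * (1 / (2 * θ) * HInt u 0 θ) * V) := by gcongr
    _ = C * V / 2 * HInt u 0 θ := by field_simp

/-- **Proposition 2.9** (𝒯_{k₀} ⊆ 𝒮_{N₀}, case A = Identity): there is a frequency bound
`N₀` valid for all normalized harmonic functions on the unit disc with at most `k₀`
nodal regions. -/
theorem T_subset_S (k₀ : ℕ) (hk₀ : 1 ≤ k₀) (θ : ℝ) (hθ : θ ∈ Set.Ioo (0 : ℝ) 1) :
    ∃ N₀ : ℝ, 0 < N₀ ∧
      ∀ u : EuclideanSpace ℝ (Fin 2) → ℝ,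
        HarmonicFnOn u (ball (0 : EuclideanSpace ℝ (Fin 2)) 1) →
        (nodalComponents {x | x ∈ ball (0 : EuclideanSpace ℝ (Fin 2)) 1 ∧ u x ≠ 0}).Finite →
        (nodalComponents {x | x ∈ ball (0 : EuclideanSpace ℝ (Fin 2)) 1 ∧ u x ≠ 0}).ncard ≤ k₀ →
        (∫ x in ball (0 : EuclideanSpace ℝ (Fin 2)) (1/2), (u x) ^ 2) = 1 →
        freqN u 0 θ ≤ N₀ := by
  obtain ⟨N₀, hN₀, hbound⟩ := T_subset_S_general k₀ θ hθ
  exact ⟨N₀, hN₀, fun u hu hfin hcard _ => div_le_of_le_mul₀ (integral_nonneg fun _ => sq_nonneg _)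
    hN₀.le (hbound u hu (hfin.cast_ncard_eq ▸ Nat.cast_le.2 hcard))⟩
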